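/- arXiv:2308.05066 — 3 statements merged into one kernel-verified Lean document; each statement's English description precedes it below -/
import Mathlib

section
/- Descent Theorem. Let k be a field of characteristic 0, G an abelian group, and B an affine k-domain graded over k by G. Let H ∈ 𝕋(B). Then: (a) for every A ∈ KHLND(B) (each such A is a graded subring A = ⊕_{i∈G}(A ∩ B_i) of B), the subring A^{(H)} = ⊕_{i∈H}(A ∩ B_i) belongs to KHLND(B^{(H)}); (b) the map KHLND(B) → KHLND(B^{(H)}) sending A to A^{(H)} is injective; (c) if HLND(B) ≠ {0} then HLND(B^{(H)}) ≠ {0}; (d) if G is torsion-free and B is non-rigid, then B^{(H)} is non-rigid. -/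
noncomputable section

/-- A derivation is locally nilpotent. -/
def IsLND {R : Type*} [CommRing R] (D : Derivation ℤ R R) : Prop :=
  ∀ b : R, ∃ n : ℕ, 0 < n ∧ (⇑D)^[n] b = 0

/-- Kernel of a derivation, as a subring. -/
def kerDer {R : Type*} [CommRing R] (D : Derivation ℤ R R) : Subring R where
  carrier := {x | D x = 0}
  one_mem' := by simp
  mul_mem' := by
    intro a b ha hb
    simp only [Set.mem_setOf_eq] at *
    rw [Derivation.leibniz, ha, hb]
    simp
  add_mem' := by
    intro a b ha hb
    simp only [Set.mem_setOf_eq] at *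
    rw [map_add, ha, hb, add_zero]
  zero_mem' := by simp
  neg_mem' := by
    intro a ha
    simp only [Set.mem_setOf_eq] at *
    rw [map_neg, ha, neg_zero]

section Graded

variable {G : Type*} [AddCommGroup G] {B : Type*} [CommRing B]

/-- The Veronese subring `B^{(H)} = ⊕_{i ∈ H} B_i` of a `G`-graded ring,
realized as the subring generated by the homogeneous elements whose degree lies in `H`. -/
def verSub (𝒜 : G → AddSubgroup B) (H : AddSubgroup G) : Subring B :=
  Subring.closure (⋃ i ∈ (H : Set G), (𝒜 i : Set B))

/-- 𝔾(B): the subgroup of G generated by the degrees of nonzero homogeneous elements. -/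
def Gsub (𝒜 : G → AddSubgroup B) : AddSubgroup G :=
  AddSubgroup.closure { i : G | 𝒜 i ≠ ⊥ }

/-- `H ∈ 𝕋(B)`: the quotient `𝔾(B)/(H ∩ 𝔾(B))` is torsion. -/
def Tmem (𝒜 : G → AddSubgroup B) (H : AddSubgroup G) : Prop :=
  ∀ g ∈ Gsub 𝒜, ∃ n : ℕ, 0 < n ∧ n • g ∈ H

/-- A homogeneous derivation of `B`. -/
def IsHomogDer (𝒜 : G → AddSubgroup B) (D : Derivation ℤ B B) : Prop :=
  ∃ d : G, ∀ (i : G) (x : B), x ∈ 𝒜 i → D x ∈ 𝒜 (i + d)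

/-- A homogeneous derivation of a graded subring `S` of `B`. -/
def IsHomogDerOn (𝒜 : G → AddSubgroup B) (S : Subring B) (D : Derivation ℤ S S) : Prop :=
  ∃ d : G, ∀ (i : G) (x : S), (x : B) ∈ 𝒜 i → ((D x : S) : B) ∈ 𝒜 (i + d)

/-- 𝕄̄(B,p): the subgroup of G generated by the degrees i with B_i ⊄ p. -/
def Mbar (𝒜 : G → AddSubgroup B) (p : Ideal B) : AddSubgroup G :=
  AddSubgroup.closure { i : G | ¬ (𝒜 i : Set B) ⊆ (p : Set B) }

/-- A prime ideal of height 1. -/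
def heightOne {R : Type*} [CommRing R] (p : Ideal R) : Prop :=
  p.IsPrime ∧ (∃ q : Ideal R, q.IsPrime ∧ q < p) ∧
    ∀ q r : Ideal R, q.IsPrime → r.IsPrime → q < r → r < p → False

open Classical in
/-- 𝔾̄(B). -/
def Gbar (𝒜 : G → AddSubgroup B) : AddSubgroup G :=
  if ∃ p : Ideal B, heightOne p then ⨅ p : {p : Ideal B // heightOne p}, Mbar 𝒜 p.1
  else Gsub 𝒜

end Graded

/-- `KHLND(B)`: the set of kernels of nonzero homogeneous locally nilpotent derivations. -/
def KHLND {G : Type*} [AddCommGroup G] {B : Type*} [CommRing B]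
    (𝒜 : G → AddSubgroup B) : Set (Subring B) :=
  { A | ∃ D : Derivation ℤ B B, IsLND D ∧ IsHomogDer 𝒜 D ∧ D ≠ 0 ∧ A = kerDer D }

/-- `KHLND(B^{(H)})` for a graded subring `S` of `B`. -/
def KHLNDOn {G : Type*} [AddCommGroup G] {B : Type*} [CommRing B]
    (𝒜 : G → AddSubgroup B) (S : Subring B) : Set (Subring S) :=
  { A | ∃ D : Derivation ℤ S S, IsLND D ∧ IsHomogDerOn 𝒜 S D ∧ D ≠ 0 ∧ A = kerDer D }

/-!
Let `D` be a nonzero homogeneous locally nilpotent derivation of degree `d`, let `S` be the set of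
nonzero homogeneous constants of `D`, and let `s` be homogeneous of degree `e` with `D s ∈ S`. Up
to `S`, every homogeneous element is a polynomial in `s` with constant coefficients. Let `U` be the
subgroup of `G` generated by `H` and the degrees of `S`, and let `m` be the order of `e` modulo
`U`. Only the powers of `s ^ m` occur in elements of degree in `U`, so that `s ^ (m - 1)` divides
a multiple of `D b` by an element of `S` for every `b ∈ B^{(H)}`. By Artin–Tate `B^{(H)}` is
finitely generated, hence a single `c ∈ S` works for all `b`; since `H` has torsion index, `c` can
be chosen so that `E = c D / s ^ (m - 1)` has degree in `H`. Then `E` restricts to `B^{(H)}`, where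
it is locally nilpotent with kernel `ker D ∩ B^{(H)}`.

A homogeneous kernel is determined by its intersection with `B^{(H)}` because every homogeneous
element has a power in `B^{(H)}`, and in characteristic zero `ker D` contains the roots of its
elements. If `G` is torsion-free it can be ordered, and the top homogeneous component of a nonzero
locally nilpotent derivation is locally nilpotent.
-/

section LocallyNilpotent

open Finset.HasAntidiagonal (antidiagonal mem_antidiagonal)

theorem iterate_derivation_mul {R A : Type*} [CommSemiring R] [CommSemiring A] [Algebra R A]
    (D : Derivation R A A) (n : ℕ) (x y : A) :
    D^[n] (x * y) =
      ∑ ij ∈ antidiagonal n, n.choose ij.1 • (D^[ij.1] x * D^[ij.2] y) := by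
  induction n with
  | zero => simp
  | succ n ih =>
    rw [Finset.sum_antidiagonal_choose_succ_nsmul (M := A) (fun i j => D^[i] x * D^[j] y) n]
    simp only [Function.iterate_succ_apply', ih, map_sum, map_nsmul, Derivation.leibniz,
      smul_eq_mul, smul_add, Finset.sum_add_distrib]
    congr 1
    refine Finset.sum_congr rfl fun ij hij => ?_
    rw [n.choose_symm_of_eq_add (mem_antidiagonal.mp hij).symm, mul_comm]

variable {R : Type*} [CommRing R] {D : Derivation ℤ R R}

theorem mem_kerDer {x : R} : x ∈ kerDer D ↔ D x = 0 :=
  Iff.rfl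

theorem iterate_mul_of_mem_kerDer {c : R} (hc : c ∈ kerDer D) (n : ℕ) (x : R) :
    D^[n] (c * x) = c * D^[n] x :=
  have hcomm : Function.Commute (c * ·) D := fun x => by simp [mem_kerDer.mp hc]
  (hcomm.iterate_right n x).symm

theorem iterate_eq_zero_of_le {m n : ℕ} (hmn : m ≤ n) {x : R} (hx : D^[m] x = 0) :
    D^[n] x = 0 := by
  rw [← Nat.sub_add_cancel hmn, Function.iterate_add_apply, hx, iterate_map_zero]

theorem iterate_pow_self {s : R} (hs : D s ∈ kerDer D) (n : ℕ) :
    D^[n] (s ^ n) = n.factorial * D s ^ n := by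
  induction n with
  | zero => simp
  | succ n ih =>
    have hconst : ((n + 1 : ℕ) : R) * D s ∈ kerDer D := mul_mem (natCast_mem _ _) hs
    calc D^[n + 1] (s ^ (n + 1)) = D^[n] (((n + 1 : ℕ) * D s) * s ^ n) := by
          rw [Function.iterate_succ_apply, Derivation.leibniz_pow, Nat.add_sub_cancel,
            nsmul_eq_mul, smul_eq_mul]
          ring_nf
      _ = (n + 1).factorial * D s ^ (n + 1) := by
          rw [iterate_mul_of_mem_kerDer hconst, ih, Nat.factorial_succ]
          push_cast
          ring

theorem iterate_sub_leading_term {s b : R} {n : ℕ} (hs : D s ∈ kerDer D)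
    (hb : D^[n] b ∈ kerDer D) :
    D^[n] (n.factorial * D s ^ n * b - D^[n] b * s ^ n) = 0 := by
  rw [iterate_map_sub, iterate_mul_of_mem_kerDer (mul_mem (natCast_mem _ _) (pow_mem hs n)),
    iterate_mul_of_mem_kerDer hb, iterate_pow_self hs, mul_comm, sub_self]

theorem mem_kerDer_of_pow_mem [IsDomain R] [CharZero R] {x : R} {n : ℕ} (hn : n ≠ 0)
    (hx : x ^ n ∈ kerDer D) : x ∈ kerDer D := by
  rcases eq_or_ne x 0 with rfl | hx0
  · exact zero_mem _
  · simpa [mem_kerDer, Derivation.leibniz_pow, hn, hx0] using hx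

namespace IsLND

theorem exists_order (hD : IsLND D) {x : R} (hx : x ≠ 0) :
    ∃ n, D^[n] x ≠ 0 ∧ D^[n + 1] x = 0 := by
  classical
  have hex : ∃ n, D^[n] x = 0 := (hD x).imp fun _ => And.right
  obtain ⟨n, hn⟩ : ∃ n, Nat.find hex = n + 1 :=
    Nat.exists_eq_succ_of_ne_zero fun h0 => hx (by simpa [h0] using Nat.find_spec hex)
  exact ⟨n, Nat.find_min hex (by lia), hn ▸ Nat.find_spec hex⟩

variable [IsDomain R] [CharZero R]

theorem iterate_eq_zero_of_mul (hD : IsLND D) {n : ℕ} {x y : R} (hy : y ≠ 0)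
    (hxy : D^[n] (x * y) = 0) : D^[n] x = 0 := by
  rcases eq_or_ne x 0 with rfl | hx
  · exact iterate_map_zero D n
  obtain ⟨p, hp, hp_succ⟩ := hD.exists_order hx
  obtain ⟨q, hq, hq_succ⟩ := hD.exists_order hy
  have hlead : D^[p + q] (x * y) = (p + q).choose p • (D^[p] x * D^[q] y) := by
    rw [iterate_derivation_mul]
    refine Finset.sum_eq_single (p, q) (fun ij hij hne => ?_) (by simp)
    rw [mem_antidiagonal] at hij
    rcases lt_or_ge p ij.1 with h | h
    · rw [iterate_eq_zero_of_le h hp_succ, zero_mul, smul_zero]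
    · have hlt : q < ij.2 := by
        refine lt_of_le_of_ne (by lia) fun h' => hne (Prod.ext (by lia) h'.symm)
      rw [iterate_eq_zero_of_le hlt hq_succ, mul_zero, smul_zero]
  have hlead_ne : D^[p + q] (x * y) ≠ 0 := by
    rw [hlead]
    exact smul_ne_zero (Nat.choose_pos (by lia)).ne' (mul_ne_zero hp hq)
  have hlt : p + q < n := by
    by_contra! hle
    exact hlead_ne (iterate_eq_zero_of_le hle hxy)
  exact iterate_eq_zero_of_le (by lia) hp_succ

theorem mem_kerDer_of_isUnit (hD : IsLND D) {x : R} (hx : IsUnit x) : x ∈ kerDer D := by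
  obtain ⟨y, hxy⟩ := hx.exists_right_inv
  exact hD.iterate_eq_zero_of_mul (n := 1) (right_ne_zero_of_mul_eq_one hxy) (by simp [hxy])

theorem algebraMap_mem_kerDer {k : Type*} [Field k] [Algebra k R] (hD : IsLND D) (c : k) :
    algebraMap k R c ∈ kerDer D := by
  rcases eq_or_ne c 0 with rfl | hc
  · simp
  · exact hD.mem_kerDer_of_isUnit ((IsUnit.mk0 c hc).map _)

end IsLND

end LocallyNilpotent

section Adjoin

theorem derivation_mem_of_mem_adjoin {k R M : Type*} [CommSemiring k] [CommRing R] [Algebra k R]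
    [AddCommGroup M] [Module R M] (D : Derivation ℤ R M) {N : Submodule R M}
    (hk : ∀ r : k, D (algebraMap k R r) ∈ N) {s : Set R} (hs : ∀ x ∈ s, D x ∈ N) {x : R}
    (hx : x ∈ Algebra.adjoin k s) : D x ∈ N := by
  induction hx using Algebra.adjoin_induction with
  | mem x hx => exact hs x hx
  | algebraMap r => exact hk r
  | add x y _ _ hx hy => exact map_add D x y ▸ N.add_mem hx hy
  | mul x y _ _ hx hy => exact D.leibniz x y ▸ N.add_mem (N.smul_mem x hy) (N.smul_mem y hx)

variable {R : Type*} [CommRing R] {D : Derivation ℤ R R}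

theorem pow_sub_one_dvd_of_mem_adjoin_pow {s x : R} {m : ℕ}
    (hx : x ∈ Algebra.adjoin (kerDer D) {s ^ m}) : s ^ (m - 1) ∣ D x := by
  rw [← Ideal.mem_span_singleton]
  refine derivation_mem_of_mem_adjoin D (fun r => ?_) ?_ hx
  · exact (mem_kerDer.mp r.2 : D (algebraMap (kerDer D) R r) = 0) ▸ zero_mem _
  · rintro _ rfl
    rw [Ideal.mem_span_singleton, D.leibniz_pow, smul_eq_mul, nsmul_eq_mul]
    exact (dvd_mul_right _ _).mul_left _

theorem exists_forall_dvd_mul {k : Type*} [CommSemiring k] [Algebra k R] {S : Submonoid R}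
    {V : Subalgebra k R} (hV : V.FG) (hk : ∀ r : k, algebraMap k R r ∈ kerDer D) {p : R}
    (hp : ∀ b ∈ V, ∃ c ∈ S, p ∣ c * D b) : ∃ c ∈ S, ∀ b ∈ V, p ∣ c * D b := by
  obtain ⟨F, rfl⟩ := hV
  choose! c hcS hc using fun x (hx : x ∈ F) => hp x (Algebra.subset_adjoin hx)
  refine ⟨∏ x ∈ F, c x, prod_mem hcS, fun b hb => ?_⟩
  rw [← Ideal.mem_span_singleton]
  refine derivation_mem_of_mem_adjoin ((∏ x ∈ F, c x) • D) (fun r => ?_) (fun x hx => ?_) hb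
  · simp [mem_kerDer.mp (hk r)]
  · rw [Ideal.mem_span_singleton]
    exact (hc x hx).trans (mul_dvd_mul_right (Finset.dvd_prod_of_mem c hx) _)

end Adjoin

section Grading

variable {G : Type*} [AddCommGroup G] {B : Type*} [CommRing B] {𝒜 : G → AddSubgroup B}

/-- `D` is homogeneous of degree `d` for the grading `𝒜`: it maps `B_i` into `B_{i+d}`. -/
def HasDegree (𝒜 : G → AddSubgroup B) (D : Derivation ℤ B B) (d : G) : Prop :=
  ∀ (i : G) (x : B), x ∈ 𝒜 i → D x ∈ 𝒜 (i + d)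

theorem HasDegree.iterate_mem {D : Derivation ℤ B B} {d : G} (hD : HasDegree 𝒜 D d) {i : G}
    {x : B} (hx : x ∈ 𝒜 i) (n : ℕ) : D^[n] x ∈ 𝒜 (i + n • d) := by
  induction n with
  | zero => simpa using hx
  | succ n ih =>
    rw [Function.iterate_succ_apply', succ_nsmul, ← add_assoc]
    exact hD _ _ ih

theorem exists_pos_nsmul_mem {H : AddSubgroup G} (hH : Tmem 𝒜 H) {i : G} {x : B}
    (hx : x ∈ 𝒜 i) (hx0 : x ≠ 0) : ∃ n : ℕ, 0 < n ∧ n • i ∈ H :=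
  hH i <| AddSubgroup.subset_closure fun hbot => hx0 <| by simpa [hbot] using hx

variable [DecidableEq G] [GradedRing 𝒜]

theorem mem_of_forall_proj_mem {S : Type*} [SetLike S B] [AddSubmonoidClass S B] {N : S} {x : B}
    (hx : ∀ i, GradedRing.proj 𝒜 i x ∈ N) : x ∈ N := by
  classical
  rw [← DirectSum.sum_support_decompose 𝒜 x]
  exact sum_mem fun i _ => hx i

theorem mem_of_proj_eq_zero {i : G} {x : B} (hx : ∀ j ≠ i, GradedRing.proj 𝒜 j x = 0) :
    x ∈ 𝒜 i := by
  refine mem_of_forall_proj_mem (𝒜 := 𝒜) fun j => ?_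
  rcases eq_or_ne j i with rfl | hj
  · exact SetLike.coe_mem _
  · exact hx j hj ▸ zero_mem _

theorem mem_of_mul_mem {i j : G} {s x : B} (hs : s ∈ 𝒜 i) (hs0 : s ∈ nonZeroDivisors B)
    (hsx : s * x ∈ 𝒜 (i + j)) : x ∈ 𝒜 j := by
  refine mem_of_proj_eq_zero fun l hl => ?_
  have hproj : s * GradedRing.proj 𝒜 l x = 0 :=
    (DirectSum.coe_decompose_mul_add_of_left_mem 𝒜 hs).symm.trans <|
      DirectSum.decompose_of_mem_ne 𝒜 hsx (by simpa using hl.symm)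
  exact (mul_left_mem_nonZeroDivisors_eq_zero_iff hs0).mp hproj

theorem derivation_eq_zero_of_homogeneous {D : Derivation ℤ B B}
    (hD : ∀ i, ∀ x ∈ 𝒜 i, D x = 0) : D = 0 := by
  ext x
  induction x using DirectSum.Decomposition.inductionOn 𝒜 with
  | zero => simp
  | homogeneous x => exact hD _ x x.2
  | add x y hx hy => simp_all

theorem HasDegree.proj_add {D : Derivation ℤ B B} {d : G} (hD : HasDegree 𝒜 D d) (i : G)
    (x : B) : GradedRing.proj 𝒜 (i + d) (D x) = D (GradedRing.proj 𝒜 i x) := by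
  simp only [GradedRing.proj_apply]
  induction x using DirectSum.Decomposition.inductionOn 𝒜 with
  | zero => simp
  | @homogeneous j x =>
    rcases eq_or_ne j i with rfl | hij
    · rw [DirectSum.decompose_of_mem_same 𝒜 x.2, DirectSum.decompose_of_mem_same 𝒜 (hD _ _ x.2)]
    · rw [DirectSum.decompose_of_mem_ne 𝒜 x.2 hij,
        DirectSum.decompose_of_mem_ne 𝒜 (hD _ _ x.2) (by simpa using hij), map_zero]
  | add x y hx hy => simp [hx, hy]

theorem HasDegree.sub_leading_term_mem {D : Derivation ℤ B B} {d e j : G} {s b : B}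
    (hD : HasDegree 𝒜 D d) (hs : s ∈ 𝒜 e) (hb : b ∈ 𝒜 j) (n : ℕ) :
    n.factorial * D s ^ n * b - D^[n] b * s ^ n ∈ 𝒜 (n • (e + d) + j) := by
  refine sub_mem (SetLike.mul_mem_graded ?_ hb) ?_
  · rw [← zero_add (n • (e + d))]
    exact SetLike.mul_mem_graded (SetLike.natCast_mem_graded 𝒜 _)
      (SetLike.pow_mem_graded n (hD _ _ hs))
  · convert SetLike.mul_mem_graded (hD.iterate_mem hb n) (SetLike.pow_mem_graded n hs) using 2
    rw [smul_add]
    abel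

theorem HasDegree.exists_slice {D : Derivation ℤ B B} {d : G} (hD : HasDegree 𝒜 D d)
    (hnil : IsLND D) (hD0 : D ≠ 0) : ∃ e, ∃ s ∈ 𝒜 e, D s ≠ 0 ∧ D s ∈ kerDer D := by
  obtain ⟨i, x, hx, hDx⟩ : ∃ i, ∃ x ∈ 𝒜 i, D x ≠ 0 := by
    contrapose! hD0
    exact derivation_eq_zero_of_homogeneous hD0
  obtain ⟨n, hn, hn_succ⟩ := hnil.exists_order hDx
  refine ⟨i + n • d, D^[n] x, hD.iterate_mem hx n, ?_, ?_⟩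
  · rwa [← Function.iterate_succ_apply' D, Function.iterate_succ_apply]
  · rwa [mem_kerDer, ← Function.iterate_succ_apply' D, ← Function.iterate_succ_apply' D,
      Function.iterate_succ_apply]

end Grading

section Veronese

variable {G : Type*} [AddCommGroup G] {B : Type*} [CommRing B] {𝒜 : G → AddSubgroup B}
  {H : AddSubgroup G}

theorem mem_verSub_of_mem {i : G} (hi : i ∈ H) {x : B} (hx : x ∈ 𝒜 i) : x ∈ verSub 𝒜 H :=
  Subring.subset_closure <| Set.mem_biUnion hi hx

theorem mem_iSup_of_mem_verSub [SetLike.GradedMonoid 𝒜] {x : B} (hx : x ∈ verSub 𝒜 H) :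
    x ∈ ⨆ i : H, 𝒜 i := by
  refine (AddSubgroup.closure_le _).mpr (fun y hy => ?_) (Subring.mem_closure_iff.mp hx)
  suffices hhom : ∃ i : H, y ∈ 𝒜 i from
    hhom.elim fun i hy => AddSubgroup.mem_iSup_of_mem (S := fun i : H => 𝒜 i) i hy
  induction hy using Submonoid.closure_induction with
  | mem y hy => simpa using hy
  | one => exact ⟨0, SetLike.one_mem_graded 𝒜⟩
  | mul y z _ _ hy hz =>
    obtain ⟨⟨i, hy⟩, ⟨j, hz⟩⟩ := hy, hz
    exact ⟨i + j, SetLike.mul_mem_graded hy hz⟩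

@[elab_as_elim]
theorem verSub_induction [SetLike.GradedMonoid 𝒜] {motive : B → Prop} {x : B}
    (hx : x ∈ verSub 𝒜 H) (homogeneous : ∀ i ∈ H, ∀ x ∈ 𝒜 i, motive x) (zero : motive 0)
    (add : ∀ x y, motive x → motive y → motive (x + y)) : motive x :=
  AddSubgroup.iSup_induction (C := motive) _ (mem_iSup_of_mem_verSub hx)
    (fun i => homogeneous i i.2) zero add

/-- The Veronese subring `B^{(H)}` as a subalgebra over a base ring sitting in degree `0`. -/
def verAlg {k : Type*} [CommSemiring k] [Algebra k B] (h𝒜 : ∀ c : k, algebraMap k B c ∈ 𝒜 0)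
    (H : AddSubgroup G) : Subalgebra k B :=
  { verSub 𝒜 H with algebraMap_mem' := fun c => mem_verSub_of_mem H.zero_mem (h𝒜 c) }

variable [DecidableEq G] [GradedRing 𝒜]

theorem isIntegral_verSub (hH : Tmem 𝒜 H) : Algebra.IsIntegral (verSub 𝒜 H) B where
  isIntegral x := by
    induction x using DirectSum.Decomposition.inductionOn 𝒜 with
    | zero => exact isIntegral_zero
    | add x y hx hy => exact hx.add hy
    | @homogeneous i x =>
      rcases eq_or_ne (x : B) 0 with hx0 | hx0
      · exact hx0 ▸ isIntegral_zero
      obtain ⟨n, hn, hni⟩ := exists_pos_nsmul_mem hH x.2 hx0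
      have hpow : (x : B) ^ n ∈ verSub 𝒜 H := mem_verSub_of_mem hni (SetLike.pow_mem_graded n x.2)
      exact .of_pow hn (isIntegral_algebraMap (x := (⟨_, hpow⟩ : verSub 𝒜 H)))

/-- The Artin–Tate lemma applied to `k ⊆ B^{(H)} ⊆ B`. -/
theorem verAlg_fg {k : Type*} [CommRing k] [IsNoetherianRing k] [Algebra k B]
    [Algebra.FiniteType k B] (h𝒜 : ∀ c : k, algebraMap k B c ∈ 𝒜 0) (hH : Tmem 𝒜 H) :
    (verAlg h𝒜 H).FG := by
  have : Algebra.IsIntegral (verAlg h𝒜 H) B := isIntegral_verSub hH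
  have : Algebra.FiniteType (verAlg h𝒜 H) B := .of_restrictScalars_finiteType k _ B
  have : Module.Finite (verAlg h𝒜 H) B := Algebra.IsIntegral.finite
  exact (Subalgebra.fg_top _).mp <|
    fg_of_fg_of_fg k (verAlg h𝒜 H) B Algebra.FiniteType.out Module.Finite.fg_top
      Subtype.val_injective

theorem kerDer_le_of_inf_verSub_le [IsDomain B] [CharZero B] {D₁ D₂ : Derivation ℤ B B}
    (hH : Tmem 𝒜 H) (hD₁ : IsHomogDer 𝒜 D₁) (hle : kerDer D₁ ⊓ verSub 𝒜 H ≤ kerDer D₂) :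
    kerDer D₁ ≤ kerDer D₂ := by
  obtain ⟨d, hd⟩ := hD₁
  intro x hx
  refine mem_of_forall_proj_mem (𝒜 := 𝒜) fun i => ?_
  set y := GradedRing.proj 𝒜 i x
  have hyi : y ∈ 𝒜 i := SetLike.coe_mem _
  have hD₁y : y ∈ kerDer D₁ := by
    rw [mem_kerDer, ← HasDegree.proj_add hd, mem_kerDer.mp hx, map_zero]
  rcases eq_or_ne y 0 with hy0 | hy0
  · exact hy0 ▸ zero_mem _
  obtain ⟨n, hn, hni⟩ := exists_pos_nsmul_mem hH hyi hy0
  exact mem_kerDer_of_pow_mem hn.ne' <|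
    hle ⟨pow_mem hD₁y n, mem_verSub_of_mem hni (SetLike.pow_mem_graded n hyi)⟩

end Veronese

section Constants

variable {G : Type*} [AddCommGroup G] [DecidableEq G] {B : Type*} [CommRing B]
  (𝒜 : G → AddSubgroup B) [GradedRing 𝒜] (D : Derivation ℤ B B) (H : AddSubgroup G)

/-- The multiplicative set of homogeneous nonzerodivisors killed by `D`. Multiplying by its
elements stands in for working in the localization of `B` at it. -/
def homogConstants : Submonoid B :=
  SetLike.homogeneousSubmonoid 𝒜 ⊓ (kerDer D).toSubmonoid ⊓ nonZeroDivisors B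

/-- The subgroup of `G` generated by `H` and the degrees of the homogeneous constants of `D`. -/
def constDegrees : AddSubgroup G :=
  AddSubgroup.closure (H ∪ {i | ∃ c ∈ homogConstants 𝒜 D, c ∈ 𝒜 i})

variable {𝒜 D H}

theorem mem_homogConstants {i : G} {c : B} (hc : c ∈ 𝒜 i) (hDc : c ∈ kerDer D)
    (hc0 : c ∈ nonZeroDivisors B) : c ∈ homogConstants 𝒜 D :=
  ⟨⟨⟨i, hc⟩, hDc⟩, hc0⟩

theorem mem_kerDer_of_mem_homogConstants {c : B} (hc : c ∈ homogConstants 𝒜 D) :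
    c ∈ kerDer D :=
  hc.1.2

theorem le_constDegrees : H ≤ constDegrees 𝒜 D H :=
  fun _ hg => AddSubgroup.subset_closure (.inl hg)

theorem mem_constDegrees_of_mem {c : B} (hc : c ∈ homogConstants 𝒜 D) {i : G} (hci : c ∈ 𝒜 i) :
    i ∈ constDegrees 𝒜 D H :=
  AddSubgroup.subset_closure (.inr ⟨c, hc, hci⟩)

/-- Torsion modulo `H` makes the degrees of the homogeneous constants closed under negation
modulo `H`. -/
theorem exists_homogConstants_sub_mem [Nontrivial B] (hH : Tmem 𝒜 H) {g : G}
    (hg : g ∈ constDegrees 𝒜 D H) : ∃ i, ∃ c ∈ homogConstants 𝒜 D, c ∈ 𝒜 i ∧ i - g ∈ H := by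
  induction hg using AddSubgroup.closure_induction with
  | mem g hg =>
    rcases hg with hg | ⟨c, hc, hcg⟩
    · exact ⟨0, 1, one_mem _, SetLike.one_mem_graded 𝒜, by simpa using hg⟩
    · exact ⟨g, c, hc, hcg, by simp⟩
  | zero => exact ⟨0, 1, one_mem _, SetLike.one_mem_graded 𝒜, by simp⟩
  | add g h _ _ hg hh =>
    obtain ⟨⟨i, b, hb, hbi, hig⟩, ⟨j, c, hc, hcj, hjh⟩⟩ := hg, hh
    refine ⟨i + j, b * c, mul_mem hb hc, SetLike.mul_mem_graded hbi hcj, ?_⟩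
    rw [add_sub_add_comm]
    exact H.add_mem hig hjh
  | neg g _ hg =>
    obtain ⟨i, c, hc, hci, hig⟩ := hg
    obtain ⟨n, hn, hni⟩ := exists_pos_nsmul_mem hH hci (nonZeroDivisors.ne_zero hc.2)
    refine ⟨(n - 1) • i, c ^ (n - 1), pow_mem hc _, SetLike.pow_mem_graded _ hci, ?_⟩
    rw [show (n - 1) • i - -g = n • i - (i - g) by
      rw [← Nat.sub_add_cancel hn, Nat.add_sub_cancel, succ_nsmul]; abel]
    exact H.sub_mem hni hig

variable [IsDomain B] [CharZero B] {d e : G} {s : B} {m : ℕ}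

/-- Subtracting from `b` its leading term in `s` lowers the order of nilpotency; that term is a
constant times `s ^ N` with `N • e ∈ constDegrees 𝒜 D H`, hence with `m ∣ N`. -/
theorem exists_mul_mem_adjoin_pow (hD : HasDegree 𝒜 D d) (hs : s ∈ 𝒜 e) (hDs0 : D s ≠ 0)
    (hDs : D s ∈ kerDer D) (hm : ∀ N : ℕ, N • e ∈ constDegrees 𝒜 D H → m ∣ N) (N : ℕ)
    {j : G} (hj : j ∈ constDegrees 𝒜 D H) {b : B} (hb : b ∈ 𝒜 j) (hN : D^[N] b = 0) :
    ∃ c ∈ homogConstants 𝒜 D, c * b ∈ Algebra.adjoin (kerDer D) {s ^ m} := by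
  induction N generalizing j b with
  | zero => exact ⟨1, one_mem _, by simp_all⟩
  | succ N ih =>
    set a := D s
    set l := D^[N] b with hl
    rcases eq_or_ne l 0 with hl0 | hl0
    · exact ih hj hb hl0
    have ha : a ∈ homogConstants 𝒜 D :=
      mem_homogConstants (hD _ _ hs) hDs (mem_nonZeroDivisors_of_ne_zero hDs0)
    have hl_deg : l ∈ 𝒜 (j + N • d) := hD.iterate_mem hb N
    have hDl : l ∈ kerDer D := by rwa [mem_kerDer, hl, ← Function.iterate_succ_apply' D]
    have hl_const := mem_homogConstants hl_deg hDl (mem_nonZeroDivisors_of_ne_zero hl0)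
    have hfact : (N.factorial : B) ∈ homogConstants 𝒜 D :=
      mem_homogConstants (SetLike.natCast_mem_graded 𝒜 _) (natCast_mem _ _)
        (mem_nonZeroDivisors_of_ne_zero (mod_cast N.factorial_ne_zero))
    have hlead : N.factorial * a ^ N ∈ homogConstants 𝒜 D := mul_mem hfact (pow_mem ha N)
    have hj' : N • (e + d) + j ∈ constDegrees 𝒜 D H :=
      add_mem (nsmul_mem (mem_constDegrees_of_mem ha (hD _ _ hs)) N) hj
    have hNe : N • e ∈ constDegrees 𝒜 D H := by
      convert sub_mem hj' (mem_constDegrees_of_mem hl_const hl_deg) using 1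
      rw [smul_add]
      abel
    obtain ⟨c, hc, hrem⟩ :=
      ih hj' (hD.sub_leading_term_mem hs hb N) (iterate_sub_leading_term hDs hDl)
    refine ⟨c * (N.factorial * a ^ N), mul_mem hc hlead, ?_⟩
    obtain ⟨r, hr⟩ := hm N hNe
    have hconst : c * l ∈ kerDer D := mul_mem (mem_kerDer_of_mem_homogConstants hc) hDl
    have hlead_mem : c * l * s ^ N ∈ Algebra.adjoin (kerDer D) {s ^ m} := by
      rw [hr, pow_mul]
      exact mul_mem (algebraMap_mem _ (⟨_, hconst⟩ : kerDer D))
        (pow_mem (Algebra.self_mem_adjoin_singleton _ _) r)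
    convert add_mem hrem hlead_mem using 1
    ring

theorem exists_pow_dvd_mul (hD : HasDegree 𝒜 D d) (hnil : IsLND D) (hs : s ∈ 𝒜 e)
    (hDs0 : D s ≠ 0) (hDs : D s ∈ kerDer D)
    (hm : ∀ N : ℕ, N • e ∈ constDegrees 𝒜 D H → m ∣ N) {b : B} (hb : b ∈ verSub 𝒜 H) :
    ∃ c ∈ homogConstants 𝒜 D, s ^ (m - 1) ∣ c * D b := by
  refine verSub_induction hb (fun i hi x hx => ?_) ⟨1, one_mem _, by simp⟩ ?_
  · obtain ⟨N, -, hN⟩ := hnil x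
    obtain ⟨c, hc, hcx⟩ := exists_mul_mem_adjoin_pow hD hs hDs0 hDs hm N (le_constDegrees hi) hx hN
    refine ⟨c, hc, ?_⟩
    have hDc := mem_kerDer.mp (mem_kerDer_of_mem_homogConstants hc)
    simpa [hDc] using pow_sub_one_dvd_of_mem_adjoin_pow hcx
  · rintro x y ⟨a, ha, hax⟩ ⟨c, hc, hcy⟩
    refine ⟨a * c, mul_mem ha hc, ?_⟩
    convert (hax.mul_left c).add (hcy.mul_left a) using 1
    rw [map_add]
    ring

variable {k : Type*} [Field k] [Algebra k B] [Algebra.FiniteType k B]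

theorem exists_dvd_mul_on_verSub (h𝒜 : ∀ r : k, algebraMap k B r ∈ 𝒜 0) (hH : Tmem 𝒜 H)
    (hD : HasDegree 𝒜 D d) (hnil : IsLND D) (hD0 : D ≠ 0) :
    ∃ p q c f, p ∈ 𝒜 q ∧ p ≠ 0 ∧ c ∈ homogConstants 𝒜 D ∧ c ∈ 𝒜 f ∧ f + d - q ∈ H ∧
      ∀ b ∈ verSub 𝒜 H, p ∣ c * D b := by
  obtain ⟨e, s, hs, hDs0, hDs⟩ := hD.exists_slice hnil hD0
  have hs0 : s ≠ 0 := by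
    rintro rfl
    exact hDs0 (map_zero D)
  set U := constDegrees 𝒜 D H
  set m := addOrderOf (e : G ⧸ U)
  have hm_iff (N : ℕ) : m ∣ N ↔ N • e ∈ U := by
    rw [addOrderOf_dvd_iff_nsmul_eq_zero, ← QuotientAddGroup.mk_nsmul,
      QuotientAddGroup.eq_zero_iff]
  have hm : 0 < m := by
    obtain ⟨n, hn, hne⟩ := exists_pos_nsmul_mem hH hs hs0
    exact Nat.pos_of_dvd_of_pos ((hm_iff n).mpr (le_constDegrees hne)) hn
  obtain ⟨c, hc, hdvd⟩ := exists_forall_dvd_mul (V := verAlg h𝒜 H) (verAlg_fg h𝒜 hH)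
    hnil.algebraMap_mem_kerDer fun b hb =>
      exists_pow_dvd_mul hD hnil hs hDs0 hDs (fun N => (hm_iff N).mpr) hb
  obtain ⟨f, hcf⟩ := hc.1.1
  have hDs_const : D s ∈ homogConstants 𝒜 D :=
    mem_homogConstants (hD _ _ hs) hDs (mem_nonZeroDivisors_of_ne_zero hDs0)
  have hdeg : f + (e + d) - m • e ∈ U :=
    sub_mem (add_mem (mem_constDegrees_of_mem hc hcf)
      (mem_constDegrees_of_mem hDs_const (hD _ _ hs))) ((hm_iff m).mp dvd_rfl)
  obtain ⟨i, β, hβ, hβi, hi⟩ := exists_homogConstants_sub_mem hH (neg_mem hdeg)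
  refine ⟨s ^ (m - 1), (m - 1) • e, β * c, i + f, SetLike.pow_mem_graded _ hs,
    pow_ne_zero _ hs0, mul_mem hβ hc, SetLike.mul_mem_graded hβi hcf, ?_, fun b hb => ?_⟩
  · convert hi using 1
    rw [← Nat.sub_add_cancel hm, Nat.add_sub_cancel, succ_nsmul]
    abel
  · rw [mul_assoc]
    exact (hdvd b hb).mul_left β

end Constants

section Descent

variable {R : Type*} [CommRing R] [IsDomain R] {D : Derivation ℤ R R} {V : Subring R}

theorem exists_derivation_mul_eq {p c : R} (hp : p ≠ 0)
    (hV : ∀ b ∈ V, ∃ x ∈ V, p * x = c * D b) :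
    ∃ E : Derivation ℤ V V, ∀ b : V, p * (E b : R) = c * D b := by
  choose ε hε using fun b : V => hV b b.2
  have hext {x y : V} (hxy : p * (x : R) = p * y) : x = y := Subtype.ext (mul_left_cancel₀ hp hxy)
  let E : V →+ V := AddMonoidHom.mk' (fun b => ⟨ε b, (hε b).1⟩) fun x y => hext <| by
    push_cast
    rw [mul_add, (hε _).2, (hε _).2, (hε _).2]
    push_cast
    rw [map_add, mul_add]
  have hE (b : V) : p * (E b : R) = c * D b := (hε b).2
  refine ⟨Derivation.mk' E.toIntLinearMap fun x y => hext ?_, hE⟩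
  have hxy := hE (x * y)
  push_cast [D.leibniz, smul_eq_mul, AddMonoidHom.coe_toIntLinearMap] at hxy ⊢
  linear_combination hxy - (x : R) * hE y - (y : R) * hE x

variable {E : Derivation ℤ V V} {p c : R}

theorem kerDer_eq_comap_of_mul_eq (hp : p ≠ 0) (hc : c ≠ 0)
    (hE : ∀ b : V, p * (E b : R) = c * D b) : kerDer E = (kerDer D).comap V.subtype := by
  ext b
  have hb : (E b : R) = 0 ↔ D b = 0 := by
    rw [← mul_eq_zero_iff_left hp, hE, mul_eq_zero_iff_left hc]
  simpa [mem_kerDer] using hb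

theorem isLND_of_mul_eq [CharZero R] (hD : IsLND D) (hp : p ≠ 0) (hc : c ∈ kerDer D)
    (hE : ∀ b : V, p * (E b : R) = c * D b) : IsLND E := by
  suffices hnil : ∀ (n : ℕ) (b : V), D^[n] (b : R) = 0 → E^[n] b = 0 from
    fun b => (hD b).imp fun n hn => ⟨hn.1, hnil n b hn.2⟩
  intro n
  induction n with
  | zero => exact fun b hb => Subtype.ext hb
  | succ n ih =>
    intro b hb
    refine ih (E b) (hD.iterate_eq_zero_of_mul hp ?_)
    rw [mul_comm, hE, iterate_mul_of_mem_kerDer hc, ← Function.iterate_succ_apply, hb, mul_zero]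

variable {k G : Type*} [Field k] [Algebra k R] [Algebra.FiniteType k R] [CharZero R]
  [AddCommGroup G] [DecidableEq G] {𝒜 : G → AddSubgroup R} [GradedRing 𝒜] {H : AddSubgroup G}

theorem exists_derivation_kerDer_eq_comap (h𝒜 : ∀ r : k, algebraMap k R r ∈ 𝒜 0)
    (hH : Tmem 𝒜 H) (hnil : IsLND D) (hhom : IsHomogDer 𝒜 D) (hD0 : D ≠ 0) :
    ∃ E : Derivation ℤ (verSub 𝒜 H) (verSub 𝒜 H), IsLND E ∧ IsHomogDerOn 𝒜 (verSub 𝒜 H) E ∧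
      E ≠ 0 ∧ (kerDer D).comap (verSub 𝒜 H).subtype = kerDer E := by
  obtain ⟨d, hD⟩ := hhom
  obtain ⟨p, q, c, f, hpq, hp, hc, hcf, hdeg, hdvd⟩ :=
    exists_dvd_mul_on_verSub h𝒜 hH hD hnil hD0
  have hquot {i : G} {b x : R} (hb : b ∈ 𝒜 i) (hx : p * x = c * D b) :
      x ∈ 𝒜 (i + (f + d - q)) := by
    refine mem_of_mul_mem hpq (mem_nonZeroDivisors_of_ne_zero hp) (hx ▸ ?_)
    convert SetLike.mul_mem_graded hcf (hD _ _ hb) using 2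
    abel
  obtain ⟨E, hE⟩ := exists_derivation_mul_eq (D := D) (V := verSub 𝒜 H) hp fun b hb => by
    refine verSub_induction hb (fun i hi b hb => ?_) ⟨0, zero_mem _, by simp⟩ ?_
    · obtain ⟨x, hx⟩ := hdvd b (mem_verSub_of_mem hi hb)
      exact ⟨x, mem_verSub_of_mem (add_mem hi hdeg) (hquot hb hx.symm), hx.symm⟩
    · rintro b b' ⟨x, hxV, hx⟩ ⟨x', hxV', hx'⟩
      exact ⟨x + x', add_mem hxV hxV', by rw [mul_add, hx, hx', map_add, mul_add]⟩
  have hDc := mem_kerDer_of_mem_homogConstants hc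
  have hker := kerDer_eq_comap_of_mul_eq hp (nonZeroDivisors.ne_zero hc.2) hE
  refine ⟨E, isLND_of_mul_eq hnil hp hDc hE, ⟨_, fun i b hb => hquot hb (hE b)⟩, ?_, hker.symm⟩
  rintro rfl
  have hle : kerDer (0 : Derivation ℤ R R) ≤ kerDer D := by
    refine kerDer_le_of_inf_verSub_le hH ⟨0, fun i x _ => zero_mem _⟩ fun x hx => ?_
    have hx0 : (⟨x, hx.2⟩ : verSub 𝒜 H) ∈ kerDer 0 := rfl
    exact hker.le hx0
  exact hD0 (Derivation.ext fun x => hle rfl)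

end Descent

section Homogenization

theorem exists_isOrderedAddMonoid (G : Type*) [AddCommGroup G] [IsAddTorsionFree G] :
    ∃ _ : LinearOrder G, IsOrderedAddMonoid G := by
  let basis := Module.Basis.ofVectorSpace ℚ (DivisibleHull G)
  let : LinearOrder (Module.Basis.ofVectorSpaceIndex ℚ (DivisibleHull G)) :=
    IsWellOrder.linearOrder WellOrderingRel
  let φ : G → Lex (Module.Basis.ofVectorSpaceIndex ℚ (DivisibleHull G) →₀ ℚ) :=
    fun g => toLex (basis.repr g)
  have hφ : Function.Injective φ :=
    toLex.injective.comp (basis.repr.injective.comp DivisibleHull.coe_injective)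
  let : LinearOrder G := LinearOrder.lift' φ hφ
  exact ⟨this, Function.Injective.isOrderedAddMonoid φ (fun x y => by simp [φ]) Iff.rfl⟩

section Components

variable {G : Type*} [AddCommGroup G] [DecidableEq G] {B : Type*} [CommRing B]
  (𝒜 : G → AddSubgroup B) [GradedRing 𝒜] (D : Derivation ℤ B B)

/-- The additive map sending each `x ∈ B_i` to the component of `D x` of degree `i + d`. -/
def homogComponentHom (d : G) : B →+ B :=
  (DirectSum.toAddMonoid fun i =>
    ((GradedRing.proj 𝒜 (i + d)).comp (D : B →+ B)).comp (𝒜 i).subtype).comp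
  (DirectSum.decomposeAddEquiv 𝒜).toAddMonoidHom

variable {𝒜 D} in
theorem homogComponentHom_apply {d i : G} {x : B} (hx : x ∈ 𝒜 i) :
    homogComponentHom 𝒜 D d x = GradedRing.proj 𝒜 (i + d) (D x) := by
  simp [homogComponentHom, DirectSum.decompose_of_mem 𝒜 hx]

/-- The homogeneous component of degree `d` of the derivation `D`. -/
def homogComponent (d : G) : Derivation ℤ B B :=
  .mk' (homogComponentHom 𝒜 D d).toIntLinearMap fun x y => by
    simp only [AddMonoidHom.coe_toIntLinearMap, smul_eq_mul]
    induction x using DirectSum.Decomposition.inductionOn 𝒜 with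
    | zero => simp
    | add x x' hx hx' => rw [add_mul, map_add, hx, hx', map_add]; ring
    | @homogeneous i x =>
      induction y using DirectSum.Decomposition.inductionOn 𝒜 with
      | zero => simp
      | add y y' hy hy' => rw [mul_add, map_add, hy, hy', map_add]; ring
      | @homogeneous j y =>
        rw [homogComponentHom_apply (SetLike.mul_mem_graded x.2 y.2),
          homogComponentHom_apply x.2, homogComponentHom_apply y.2, D.leibniz, map_add]
        congr 1
        · rw [add_assoc]
          exact DirectSum.coe_decompose_mul_add_of_left_mem 𝒜 x.2
        · rw [add_comm i j, add_assoc]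
          exact DirectSum.coe_decompose_mul_add_of_left_mem 𝒜 y.2

variable {𝒜 D}

theorem homogComponent_apply {d i : G} {x : B} (hx : x ∈ 𝒜 i) :
    homogComponent 𝒜 D d x = GradedRing.proj 𝒜 (i + d) (D x) :=
  homogComponentHom_apply hx

theorem hasDegree_homogComponent (d : G) : HasDegree 𝒜 (homogComponent 𝒜 D d) d :=
  fun _ _ hx => homogComponent_apply (D := D) hx ▸ SetLike.coe_mem _

theorem exists_homogComponent_ne_zero (hD0 : D ≠ 0) : ∃ d, homogComponent 𝒜 D d ≠ 0 := by
  contrapose! hD0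
  refine derivation_eq_zero_of_homogeneous (𝒜 := 𝒜) fun i x hx => ?_
  refine (mem_of_forall_proj_mem (𝒜 := 𝒜) (N := (⊥ : AddSubgroup B)) fun j => ?_ : D x ∈ _)
  rw [AddSubgroup.mem_bot, ← add_sub_cancel i j, ← homogComponent_apply hx, hD0,
    Derivation.coe_zero, Pi.zero_apply]

theorem finite_homogComponent_apply_ne_zero (x : B) :
    {d | homogComponent 𝒜 D d x ≠ 0}.Finite := by
  induction x using DirectSum.Decomposition.inductionOn 𝒜 with
  | zero => simp
  | add x y hx hy =>
    refine (hx.union hy).subset fun d hd => ?_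
    contrapose! hd
    simp_all
  | @homogeneous i x =>
    refine Set.Finite.subset
      ((DFinsupp.finite_support (DirectSum.decompose 𝒜 (D x))).preimage
        (add_right_injective i).injOn) fun d hd => ?_
    rw [Set.mem_ofPred_eq, homogComponent_apply x.2] at hd
    simpa using hd

theorem finite_homogComponent_ne_zero {k : Type*} [CommSemiring k] [Algebra k B]
    [Algebra.FiniteType k B] (h𝒜 : ∀ c : k, algebraMap k B c ∈ 𝒜 0)
    (hk : ∀ c : k, algebraMap k B c ∈ kerDer D) : {d | homogComponent 𝒜 D d ≠ 0}.Finite := by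
  obtain ⟨F, hF⟩ := (Algebra.FiniteType.out : (⊤ : Subalgebra k B).FG)
  refine (F.finite_toSet.biUnion fun x _ =>
    finite_homogComponent_apply_ne_zero (𝒜 := 𝒜) (D := D) x).subset fun d hd => ?_
  contrapose! hd
  simp only [Set.mem_iUnion, Set.mem_ofPred_eq, not_exists, not_not] at hd ⊢
  ext x
  refine (derivation_mem_of_mem_adjoin (k := k) (N := ⊥) _ (fun c => ?_) hd
    (hF ▸ Algebra.mem_top) :)
  simp [homogComponent_apply (h𝒜 c), mem_kerDer.mp (hk c)]

end Components

section TopComponent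

variable {G : Type*} [AddCommGroup G] [LinearOrder G] [IsOrderedAddMonoid G] [DecidableEq G]
  {B : Type*} [CommRing B] {𝒜 : G → AddSubgroup B} [GradedRing 𝒜] {D : Derivation ℤ B B} {d : G}

theorem proj_eq_zero_of_lt (htop : ∀ d' > d, homogComponent 𝒜 D d' = 0) {i j : G} {x : B}
    (hx : x ∈ 𝒜 i) (hij : i + d < j) : GradedRing.proj 𝒜 j (D x) = 0 := by
  rw [← add_sub_cancel i j, ← homogComponent_apply hx, htop _ (lt_sub_iff_add_lt'.mpr hij),
    Derivation.coe_zero, Pi.zero_apply]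

theorem proj_eq_zero_of_forall_lt (htop : ∀ d' > d, homogComponent 𝒜 D d' = 0) {i j : G} {x : B}
    (hx : ∀ l > i, GradedRing.proj 𝒜 l x = 0) (hij : i + d < j) :
    GradedRing.proj 𝒜 j (D x) = 0 := by
  change x ∈ ((GradedRing.proj 𝒜 j).comp (D : B →+ B)).ker
  refine mem_of_forall_proj_mem (𝒜 := 𝒜) fun l => ?_
  rcases lt_or_ge i l with hil | hli
  · exact hx l hil ▸ zero_mem _
  · exact proj_eq_zero_of_lt htop (SetLike.coe_mem _) ((add_le_add_left hli d).trans_lt hij)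

theorem proj_add_eq_homogComponent (htop : ∀ d' > d, homogComponent 𝒜 D d' = 0) {i : G} {x : B}
    (hx : ∀ l > i, GradedRing.proj 𝒜 l x = 0) :
    GradedRing.proj 𝒜 (i + d) (D x) = homogComponent 𝒜 D d (GradedRing.proj 𝒜 i x) := by
  change x ∈ ((GradedRing.proj 𝒜 (i + d)).comp (D : B →+ B)).eqLocus
    ((homogComponent 𝒜 D d : B →+ B).comp (GradedRing.proj 𝒜 i))
  refine mem_of_forall_proj_mem (𝒜 := 𝒜) fun l => ?_
  set y := GradedRing.proj 𝒜 l x with hy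
  have hyl : y ∈ 𝒜 l := SetLike.coe_mem _
  rcases lt_trichotomy l i with hli | rfl | hil
  · change GradedRing.proj 𝒜 (i + d) (D y) = homogComponent 𝒜 D d (GradedRing.proj 𝒜 i y)
    rw [proj_eq_zero_of_lt htop hyl (add_lt_add_left hli d), GradedRing.proj_apply 𝒜 i,
      DirectSum.decompose_of_mem_ne 𝒜 hyl hli.ne, map_zero]
  · change GradedRing.proj 𝒜 (l + d) (D y) = homogComponent 𝒜 D d (GradedRing.proj 𝒜 l y)
    rw [GradedRing.proj_apply 𝒜 l, DirectSum.decompose_of_mem_same 𝒜 hyl,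
      homogComponent_apply hyl]
  · exact (hy.trans (hx l hil)) ▸ zero_mem _

theorem iterate_homogComponent_apply (htop : ∀ d' > d, homogComponent 𝒜 D d' = 0) {i : G} {x : B}
    (hx : x ∈ 𝒜 i) (n : ℕ) :
    (homogComponent 𝒜 D d)^[n] x = GradedRing.proj 𝒜 (i + n • d) (D^[n] x) := by
  suffices h : (∀ l > i + n • d, GradedRing.proj 𝒜 l (D^[n] x) = 0) ∧
      GradedRing.proj 𝒜 (i + n • d) (D^[n] x) = (homogComponent 𝒜 D d)^[n] x from h.2.symm
  induction n with
  | zero =>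
    rw [zero_nsmul, add_zero]
    exact ⟨fun l hl => DirectSum.decompose_of_mem_ne 𝒜 hx hl.ne,
      DirectSum.decompose_of_mem_same 𝒜 hx⟩
  | succ n ih =>
    rw [succ_nsmul, ← add_assoc, Function.iterate_succ_apply', Function.iterate_succ_apply',
      ← ih.2]
    exact ⟨fun l => proj_eq_zero_of_forall_lt htop ih.1, proj_add_eq_homogComponent htop ih.1⟩

theorem isLND_homogComponent (hD : IsLND D) (htop : ∀ d' > d, homogComponent 𝒜 D d' = 0) :
    IsLND (homogComponent 𝒜 D d) := by
  intro x
  induction x using DirectSum.Decomposition.inductionOn 𝒜 with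
  | zero => exact ⟨1, one_pos, map_zero _⟩
  | homogeneous x =>
    refine (hD x).imp fun n hn => ⟨hn.1, ?_⟩
    rw [iterate_homogComponent_apply htop x.2, hn.2, map_zero]
  | add x y hx hy =>
    obtain ⟨⟨m, hm, hx⟩, ⟨n, -, hy⟩⟩ := hx, hy
    refine ⟨m + n, by lia, ?_⟩
    rw [iterate_map_add, iterate_eq_zero_of_le (by lia) hx, iterate_eq_zero_of_le (by lia) hy,
      add_zero]

end TopComponent

theorem exists_homogeneous_isLND {k G B : Type*} [Field k] [AddCommGroup G] [IsAddTorsionFree G]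
    [DecidableEq G] [CommRing B] [IsDomain B] [CharZero B] [Algebra k B] [Algebra.FiniteType k B]
    {𝒜 : G → AddSubgroup B} [GradedRing 𝒜] (h𝒜 : ∀ c : k, algebraMap k B c ∈ 𝒜 0)
    {D : Derivation ℤ B B} (hD : IsLND D) (hD0 : D ≠ 0) :
    ∃ D' : Derivation ℤ B B, IsLND D' ∧ IsHomogDer 𝒜 D' ∧ D' ≠ 0 := by
  obtain ⟨_, _⟩ := exists_isOrderedAddMonoid G
  obtain ⟨d, hd, hmax⟩ := (finite_homogComponent_ne_zero h𝒜 hD.algebraMap_mem_kerDer).exists_maximal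
    (exists_homogComponent_ne_zero (𝒜 := 𝒜) hD0)
  refine ⟨homogComponent 𝒜 D d, isLND_homogComponent hD fun d' hd' => ?_,
    ⟨d, hasDegree_homogComponent d⟩, hd⟩
  by_contra hne
  exact hd'.not_ge (hmax hne hd'.le)

end Homogenization

/-- **Descent Theorem.**  Let k be a field of characteristic 0, G an abelian group,
B an affine k-domain graded over k by G, and H ∈ 𝕋(B).  Each A ∈ KHLND(B) is a graded
subring of B, so that A^{(H)} = ⊕_{i ∈ H}(A ∩ B_i) = A ∩ B^{(H)}, formalized as the
comap of A along the inclusion B^{(H)} → B.  Then: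
(a) A^{(H)} ∈ KHLND(B^{(H)}) for every A ∈ KHLND(B);
(b) the map KHLND(B) → KHLND(B^{(H)}), A ↦ A^{(H)}, is injective;
(c) if HLND(B) ≠ {0} then HLND(B^{(H)}) ≠ {0};
(d) if G is torsion-free and B is non-rigid, then B^{(H)} is non-rigid. -/
theorem descent_theorem
    {k : Type*} [Field k] [CharZero k]
    {G : Type*} [AddCommGroup G] [DecidableEq G]
    {B : Type*} [CommRing B] [IsDomain B] [Algebra k B] [Algebra.FiniteType k B]
    (𝒜 : G → AddSubgroup B) [GradedRing 𝒜]
    (hoverk : ∀ c : k, algebraMap k B c ∈ 𝒜 0)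
    (H : AddSubgroup G) (hH : Tmem 𝒜 H) :
    (∀ A ∈ KHLND 𝒜, A.comap (verSub 𝒜 H).subtype ∈ KHLNDOn 𝒜 (verSub 𝒜 H)) ∧
    (∀ A₁ ∈ KHLND 𝒜, ∀ A₂ ∈ KHLND 𝒜,
      A₁.comap (verSub 𝒜 H).subtype = A₂.comap (verSub 𝒜 H).subtype → A₁ = A₂) ∧
    ((∃ D : Derivation ℤ B B, IsLND D ∧ IsHomogDer 𝒜 D ∧ D ≠ 0) →
      ∃ D : Derivation ℤ (verSub 𝒜 H) (verSub 𝒜 H),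
        IsLND D ∧ IsHomogDerOn 𝒜 (verSub 𝒜 H) D ∧ D ≠ 0) ∧
    ((∀ (g : G) (n : ℕ), 0 < n → n • g = 0 → g = 0) →
      (∃ D : Derivation ℤ B B, IsLND D ∧ D ≠ 0) →
      ∃ D : Derivation ℤ (verSub 𝒜 H) (verSub 𝒜 H), IsLND D ∧ D ≠ 0) := by
  have : CharZero B := charZero_of_injective_algebraMap (algebraMap k B).injective
  have descend : ∀ D : Derivation ℤ B B, IsLND D → IsHomogDer 𝒜 D → D ≠ 0 →
      (kerDer D).comap (verSub 𝒜 H).subtype ∈ KHLNDOn 𝒜 (verSub 𝒜 H) :=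
    fun D hnil hhom hD0 => exists_derivation_kerDer_eq_comap hoverk hH hnil hhom hD0
  refine ⟨?_, ?_, ?_, ?_⟩
  · rintro A ⟨D, hnil, hhom, hD0, rfl⟩
    exact descend D hnil hhom hD0
  · rintro A₁ ⟨D₁, -, hhom₁, -, rfl⟩ A₂ ⟨D₂, -, hhom₂, -, rfl⟩ heq
    exact le_antisymm
      (kerDer_le_of_inf_verSub_le hH hhom₁ fun x hx => heq.le (x := ⟨x, hx.2⟩) hx.1)
      (kerDer_le_of_inf_verSub_le hH hhom₂ fun x hx => heq.ge (x := ⟨x, hx.2⟩) hx.1)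
  · rintro ⟨D, hnil, hhom, hD0⟩
    obtain ⟨E, hE, hEhom, hE0, -⟩ := descend D hnil hhom hD0
    exact ⟨E, hE, hEhom, hE0⟩
  · rintro htf ⟨D, hnil, hD0⟩
    have : IsAddTorsionFree G := .of_not_isOfFinAddOrder fun g hg hfin => by
      obtain ⟨n, hn, hng⟩ := isOfFinAddOrder_iff_nsmul_eq_zero.mp hfin
      exact hg (htf g n hn hng)
    obtain ⟨D', hnil', hhom', hD0'⟩ := exists_homogeneous_isLND hoverk hnil hD0
    obtain ⟨E, hE, -, hE0, -⟩ := descend D' hnil' hhom' hD0'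
    exact ⟨E, hE, hE0⟩
end
end

section
/- Let B be an integral domain of characteristic 0 graded by an abelian group G, and suppose that B = R[t] is a polynomial ring in one variable t over a graded subring R of B, where t is a homogeneous element of B. Then for every H ∈ 𝕋(B), the subring R^{(H)} belongs to KHLND(B^{(H)}); that is, there exists a nonzero homogeneous locally nilpotent derivation of B^{(H)} whose kernel is R^{(H)}. -/
noncomputable section

/-!
The degrees of the nonzero homogeneous elements of `R`, taken modulo `H`, form a group `K` because
`G` is torsion modulo `H` on degrees. Let `m` be the order of `deg t` in `G / K`. A monomial `a tʲ`
of degree in `H` must have `m ∣ j`, so `B^{(H)} ⊆ R[tᵐ]`; and some nonzero homogeneous `r ∈ R` has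
`deg r ≡ m · deg t` modulo `H`. The derivation `r · d/d(tᵐ)` of `R[tᵐ]` is homogeneous of degree
`deg r - m · deg t ∈ H`, hence restricts to `B^{(H)}`, and in characteristic zero its kernel is `R`.
-/

section Semiconj

variable {S A : Type*} [CommRing S] [CommRing A] {φ : S →+* A}
  {D : Derivation ℤ S S} {δ : Derivation ℤ A A}

lemma exists_derivation_semiconj (hφ : Function.Injective φ) (hδ : ∀ x, δ (φ x) ∈ φ.range) :
    ∃ D : Derivation ℤ S S, Function.Semiconj φ D δ := by
  choose f hf using hδ
  have f_add (x y : S) : f (x + y) = f x + f y := hφ (by simp only [hf, map_add])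
  have f_leibniz (x y : S) : f (x * y) = x • f y + y • f x :=
    hφ (by simp only [hf, map_add, map_mul, smul_eq_mul, Derivation.leibniz])
  exact ⟨.mk' (AddMonoidHom.mk' f f_add).toIntLinearMap f_leibniz, hf⟩

lemma IsLND.of_semiconj (hφ : Function.Injective φ) (h : Function.Semiconj φ D δ)
    (hδ : IsLND δ) : IsLND D := by
  intro x
  obtain ⟨n, hn, hx⟩ := hδ (φ x)
  exact ⟨n, hn, hφ (by rw [h.iterate_right n x, hx, map_zero])⟩

lemma kerDer_eq_comap_of_semiconj (hφ : Function.Injective φ) (h : Function.Semiconj φ D δ) :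
    kerDer D = (kerDer δ).comap φ := by
  ext x
  change D x = 0 ↔ δ (φ x) = 0
  rw [← h x, map_eq_zero_iff φ hφ]

lemma subring_closure_coe_preimage_eq_top {B : Type*} [CommRing B] {X : Set B} {T : Subring B}
    (hX : Subring.closure X = T) : Subring.closure (((↑) : T → B) ⁻¹' X) = ⊤ := by
  subst hX
  exact eq_top_iff.mpr fun ⟨_, hx⟩ _ => Subring.closure_induction
    (fun _ hx => Subring.subset_closure hx) (zero_mem _) (one_mem _) (fun _ _ _ _ => add_mem)
    (fun _ _ => neg_mem) (fun _ _ _ _ => mul_mem) hx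

lemma derivation_apply_mem_range_of_closure_eq_top {Y : Set S} (hY : Subring.closure Y = ⊤)
    (hδ : ∀ y ∈ Y, δ (φ y) ∈ φ.range) (x : S) : δ (φ x) ∈ φ.range := by
  have hx : x ∈ Subring.closure Y := hY ▸ Subring.mem_top x
  induction hx using Subring.closure_induction with
  | mem y hy => exact hδ y hy
  | zero => simp only [map_zero, zero_mem]
  | one => simp only [map_one, Derivation.map_one_eq_zero, zero_mem]
  | add x y _ _ ihx ihy => simpa only [map_add] using add_mem ihx ihy
  | neg x _ ihx => simpa only [map_neg] using neg_mem ihx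
  | mul x y _ _ ihx ihy =>
    rw [map_mul, Derivation.leibniz]
    exact add_mem (mul_mem ⟨x, rfl⟩ ihy) (mul_mem ⟨y, rfl⟩ ihx)

lemma exists_ringHom_comp_eq_subtype {B : Type*} [CommRing B] {ψ : A →+* B}
    (hψ : Function.Injective ψ) {T : Subring B} (hT : T ≤ ψ.range) :
    ∃ φ : T →+* A, ψ.comp φ = T.subtype := by
  let e : A ≃+* ψ.range := RingEquiv.ofBijective ψ.rangeRestrict
    ⟨fun _ _ h => hψ (congrArg Subtype.val h), ψ.rangeRestrict_surjective⟩
  exact ⟨e.symm.toRingHom.comp (Subring.inclusion hT), RingHom.ext fun x =>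
    congrArg Subtype.val (e.apply_symm_apply (Subring.inclusion hT x))⟩

end Semiconj

section ScaledDerivative

open Polynomial

variable {A : Type*} [CommRing A]

/-- The derivations of a ring. Naming the type keeps `ℤ` acting through the ring structure when `S`
is a polynomial ring, where instance search would find `Polynomial.algebraOfAlgebra` instead. -/
abbrev RingDerivation (S : Type*) [CommRing S] : Type _ := Derivation ℤ S S

/-- The derivation `a · d/dX` of `A[X]`. -/
def scaledDerivative (a : A) : RingDerivation A[X] :=
  (a • derivative').restrictScalars ℤ

@[simp]
lemma scaledDerivative_apply (a : A) (q : A[X]) :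
    scaledDerivative a q = a • derivative q := rfl

lemma scaledDerivative_iterate (a : A) (n : ℕ) (q : A[X]) :
    (scaledDerivative a)^[n] q = a ^ n • derivative^[n] q := by
  induction n with
  | zero => simp only [Function.iterate_zero, id_eq, pow_zero, one_smul]
  | succ n ih =>
    rw [Function.iterate_succ_apply', ih, scaledDerivative_apply, derivative_smul, smul_smul,
      ← pow_succ', ← Function.iterate_succ_apply' derivative]

lemma isLND_scaledDerivative (a : A) : IsLND (scaledDerivative a) := fun q =>
  ⟨q.natDegree + 1, q.natDegree.succ_pos, by
    rw [scaledDerivative_iterate, iterate_derivative_eq_zero q.natDegree.lt_succ_self, smul_zero]⟩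

lemma kerDer_scaledDerivative [NoZeroDivisors A] [IsAddTorsionFree A] {a : A} (ha : a ≠ 0) :
    kerDer (scaledDerivative a) = (C : A →+* A[X]).range := by
  ext q
  change a • derivative q = 0 ↔ q ∈ Set.range C
  rw [smul_eq_zero_iff_right ha, derivative_eq_zero, natDegree_eq_zero]
  rfl

end ScaledDerivative

section PolynomialOverSubring

open Polynomial

lemma expand_contract_of_dvd {A : Type*} [CommSemiring A] {m : ℕ} (hm : 0 < m) {q : A[X]}
    (hq : ∀ j, q.coeff j ≠ 0 → m ∣ j) : expand A m (contract m q) = q := by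
  ext j
  rw [coeff_expand hm]
  split_ifs with hj
  · rw [coeff_contract hm.ne', Nat.div_mul_cancel hj]
  · exact (not_not.mp (mt (hq j) hj)).symm

variable {B : Type*} [CommRing B] {R : Subring B} {t : B}

lemma transcendental_of_forall_sum_eq_zero
    (h : ∀ (n : ℕ) (c : ℕ → B), (∀ i, c i ∈ R) →
      (∑ i ∈ Finset.range n, c i * t ^ i) = 0 → ∀ i < n, c i = 0) :
    Transcendental R t := by
  refine transcendental_iff.mpr fun q hq => leadingCoeff_eq_zero.mp (Subtype.ext ?_)
  rw [aeval_eq_sum_range] at hq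
  exact h _ (fun i => q.coeff i) (fun i => (q.coeff i).2) hq _ q.natDegree.lt_succ_self

lemma aeval_surjective_of_forall_mem_closure
    (h : ∀ b : B, b ∈ Subring.closure ((R : Set B) ∪ {t})) :
    Function.Surjective (aeval t : R[X] →ₐ[R] B) := by
  have hle : Subring.closure ((R : Set B) ∪ {t}) ≤ (aeval t : R[X] →ₐ[R] B).range.toSubring := by
    rw [Subring.closure_le]
    rintro x (hx | rfl)
    · exact ⟨C ⟨x, hx⟩, aeval_C _ _⟩
    · exact ⟨X, aeval_X _⟩
  exact fun b => hle (h b)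

end PolynomialOverSubring

section Graded

open Polynomial

variable {G : Type*} [AddCommGroup G] {B : Type*} [CommRing B] {𝒜 : G → AddSubgroup B}
  {R : Subring B} {c d e i : G} {r : R} {q : R[X]} {s t : B} {H : AddSubgroup G}

lemma addOrderOf_mk_dvd_iff {K : AddSubgroup G} {n : ℕ} :
    addOrderOf (d : G ⧸ K) ∣ n ↔ n • d ∈ K := by
  rw [addOrderOf_dvd_iff_nsmul_eq_zero, ← QuotientAddGroup.mk_nsmul, QuotientAddGroup.eq_zero_iff]

lemma mem_verSub {x : B} (hi : i ∈ H) (hx : x ∈ 𝒜 i) : x ∈ verSub 𝒜 H :=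
  Subring.subset_closure (Set.mem_biUnion hi hx)

lemma closure_setOf_homogeneous_verSub (𝒜 : G → AddSubgroup B) (H : AddSubgroup G) :
    Subring.closure {x : verSub 𝒜 H | ∃ i ∈ H, (x : B) ∈ 𝒜 i} = ⊤ := by
  rw [← subring_closure_coe_preimage_eq_top (T := verSub 𝒜 H) rfl]
  congr 1
  ext x
  simp only [Set.mem_preimage, Set.mem_iUnion, SetLike.mem_coe, exists_prop, Set.mem_ofPred_eq]

lemma mem_Gsub {x : B} (hx : x ∈ 𝒜 i) (hx0 : x ≠ 0) : i ∈ Gsub 𝒜 :=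
  AddSubgroup.subset_closure fun h => hx0 ((AddSubgroup.eq_bot_iff_forall _).mp h x hx)

lemma not_verSub_le [Nontrivial B] [SetLike.GradedMonoid 𝒜] (hH : Tmem 𝒜 H) (ht : t ∈ 𝒜 d)
    (htt : Transcendental R t) : ¬ verSub 𝒜 H ≤ R := by
  intro hle
  have ht0 : t ≠ 0 := fun h => htt (h ▸ isAlgebraic_zero)
  obtain ⟨n, hn, hnd⟩ := hH d (mem_Gsub ht ht0)
  have htn : t ^ n ∈ R := hle (mem_verSub hnd (SetLike.pow_mem_graded n ht))
  exact htt.pow hn (isAlgebraic_algebraMap (⟨t ^ n, htn⟩ : R))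

section DegreesMod

/-- The subgroup of `G` of all elements congruent modulo `H` to the degree of a nonzero
homogeneous element of `R`. Torsion modulo `H` makes this submonoid closed under negation. -/
def degreesMod [IsDomain B] (𝒜 : G → AddSubgroup B) [SetLike.GradedMonoid 𝒜] (R : Subring B)
    {H : AddSubgroup G} (hH : Tmem 𝒜 H) : AddSubgroup G where
  carrier := {g | ∃ e, ∃ r ∈ R, r ≠ 0 ∧ r ∈ 𝒜 e ∧ e - g ∈ H}
  zero_mem' := ⟨0, 1, one_mem R, one_ne_zero, SetLike.GradedOne.one_mem, by simp⟩
  add_mem' := by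
    rintro g g' ⟨e, r, hr, hr0, hre, hg⟩ ⟨e', r', hr', hr0', hre', hg'⟩
    exact ⟨e + e', r * r', mul_mem hr hr', mul_ne_zero hr0 hr0', SetLike.GradedMul.mul_mem hre hre',
      add_sub_add_comm e e' g g' ▸ add_mem hg hg'⟩
  neg_mem' := by
    rintro g ⟨e, r, hr, hr0, hre, hg⟩
    obtain ⟨n, hn, hne⟩ := hH e (mem_Gsub hre hr0)
    obtain ⟨k, rfl⟩ := Nat.exists_eq_add_one.mpr hn
    have hdeg : k • e - -g = (k + 1) • e - (e - g) := by rw [succ_nsmul]; abel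
    exact ⟨k • e, r ^ k, pow_mem hr k, pow_ne_zero k hr0, SetLike.pow_mem_graded k hre,
      hdeg ▸ sub_mem hne hg⟩

variable [IsDomain B] [SetLike.GradedMonoid 𝒜]

lemma degree_mem_degreesMod (hH : Tmem 𝒜 H) (hr : (r : B) ∈ 𝒜 e) (hr0 : r ≠ 0) :
    e ∈ degreesMod 𝒜 R hH :=
  ⟨e, r, r.2, Subtype.coe_ne_coe.mpr hr0, hr, by simp⟩

lemma le_degreesMod (hH : Tmem 𝒜 H) : H ≤ degreesMod 𝒜 R hH := fun g hg =>
  ⟨0, 1, one_mem R, one_ne_zero, SetLike.GradedOne.one_mem, by simpa using hg⟩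

lemma addOrderOf_mk_degreesMod_pos (hH : Tmem 𝒜 H) (ht : t ∈ 𝒜 d) (ht0 : t ≠ 0) :
    0 < addOrderOf (d : G ⧸ degreesMod 𝒜 R hH) := by
  obtain ⟨n, hn, hnd⟩ := hH d (mem_Gsub ht ht0)
  exact Nat.pos_of_dvd_of_pos (addOrderOf_mk_dvd_iff.mpr (le_degreesMod hH hnd)) hn

end DegreesMod

/-- `q` is homogeneous of degree `i` for the grading of `R[X]` that extends the grading of `B`
restricted to `R` and gives the variable `X` degree `c`. -/
def IsHomogPoly (𝒜 : G → AddSubgroup B) {R : Subring B} (c i : G) (q : R[X]) : Prop :=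
  ∀ j : ℕ, (q.coeff j : B) ∈ 𝒜 (i - j • c)

lemma IsHomogPoly.aeval_mem [SetLike.GradedMonoid 𝒜] (hs : s ∈ 𝒜 c)
    (hq : IsHomogPoly 𝒜 c i q) : aeval s q ∈ 𝒜 i := by
  rw [aeval_eq_sum_range]
  refine sum_mem fun j _ => ?_
  simpa only [Subring.smul_def, smul_eq_mul, sub_add_cancel] using
    SetLike.GradedMul.mul_mem (hq j) (SetLike.pow_mem_graded j hs)

lemma isHomogPoly_scaledDerivative [SetLike.GradedMonoid 𝒜] (hr : (r : B) ∈ 𝒜 e)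
    (hq : IsHomogPoly 𝒜 c i q) : IsHomogPoly 𝒜 c (i + (e - c)) (scaledDerivative r q) := by
  intro j
  have hdeg : e + (i - (j + 1) • c) = i + (e - c) - j • c := by
    rw [succ_nsmul]; abel
  have hcoeff : ((scaledDerivative r q).coeff j : B) =
      (j + 1) • ((r : B) * q.coeff (j + 1)) := by
    simp only [scaledDerivative_apply, coeff_smul, coeff_derivative, smul_eq_mul, nsmul_eq_mul]
    push_cast
    ring
  rw [hcoeff, ← hdeg]
  exact nsmul_mem (SetLike.GradedMul.mul_mem hr (hq (j + 1))) _

variable [DecidableEq G] [GradedRing 𝒜]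

lemma exists_isHomogPoly_aeval_eq_decompose
    (hR : DirectSum.SetLike.IsHomogeneous 𝒜 R) (hs : s ∈ 𝒜 c) (i : G) (q : R[X]) :
    ∃ p : R[X], IsHomogPoly 𝒜 c i p ∧
      aeval s p = (DirectSum.decompose 𝒜 (aeval s q) i : B) := by
  induction q using Polynomial.induction_on' with
  | add q₁ q₂ h₁ h₂ =>
    obtain ⟨p₁, hp₁, hq₁⟩ := h₁
    obtain ⟨p₂, hp₂, hq₂⟩ := h₂
    refine ⟨p₁ + p₂, fun j => ?_, ?_⟩
    · rw [coeff_add]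
      exact add_mem (hp₁ j) (hp₂ j)
    · simp only [map_add, DirectSum.decompose_add, DirectSum.add_apply, AddMemClass.coe_add,
        hq₁, hq₂]
  | monomial n a =>
    refine ⟨monomial n ⟨_, hR (i - n • c) a.2⟩, fun j => ?_, ?_⟩
    · rw [coeff_monomial]
      split_ifs with hnj
      · exact hnj ▸ SetLike.coe_mem _
      · exact zero_mem _
    · have hdecomp := DirectSum.coe_decompose_mul_add_of_right_mem 𝒜 (a := (a : B))
        (i := i - n • c) (SetLike.pow_mem_graded n hs)
      rw [sub_add_cancel] at hdecomp
      rw [aeval_monomial, aeval_monomial]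
      exact hdecomp.symm

lemma isHomogPoly_of_aeval_mem
    (hR : DirectSum.SetLike.IsHomogeneous 𝒜 R)
    (hs : s ∈ 𝒜 c) (hst : Transcendental R s) (hq : aeval s q ∈ 𝒜 i) :
    IsHomogPoly 𝒜 c i q := by
  obtain ⟨p, hp, hpq⟩ := exists_isHomogPoly_aeval_eq_decompose hR hs i q
  rw [DirectSum.decompose_of_mem_same 𝒜 hq] at hpq
  exact transcendental_iff_injective.mp hst hpq ▸ hp

lemma aeval_scaledDerivative_mem
    (hR : DirectSum.SetLike.IsHomogeneous 𝒜 R)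
    (hs : s ∈ 𝒜 c) (hst : Transcendental R s) (hr : (r : B) ∈ 𝒜 e) (hq : aeval s q ∈ 𝒜 i) :
    aeval s (scaledDerivative r q) ∈ 𝒜 (i + (e - c)) :=
  (isHomogPoly_scaledDerivative hr (isHomogPoly_of_aeval_mem hR hs hst hq)).aeval_mem hs

theorem exists_isLND_verSub_of_le_range_aeval [IsDomain B] [CharZero B]
    (hR : DirectSum.SetLike.IsHomogeneous 𝒜 R) (hs : s ∈ 𝒜 c) (hst : Transcendental R s)
    (hle : verSub 𝒜 H ≤ (aeval s : R[X] →ₐ[R] B).toRingHom.range)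
    (hr : (r : B) ∈ 𝒜 e) (hr0 : r ≠ 0) (hec : e - c ∈ H) :
    ∃ D : Derivation ℤ (verSub 𝒜 H) (verSub 𝒜 H),
      IsLND D ∧ IsHomogDerOn 𝒜 (verSub 𝒜 H) D ∧
      kerDer D = R.comap (verSub 𝒜 H).subtype := by
  have hinj : Function.Injective (aeval s : R[X] →ₐ[R] B) := transcendental_iff_injective.mp hst
  obtain ⟨φ, hφ⟩ := exists_ringHom_comp_eq_subtype hinj hle
  have aeval_φ (x : verSub 𝒜 H) : aeval s (φ x) = (x : B) := RingHom.congr_fun hφ x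
  have φ_inj : Function.Injective φ := fun x y hxy =>
    Subtype.ext (by rw [← aeval_φ x, ← aeval_φ y, hxy])
  have φ_range (x : verSub 𝒜 H) : scaledDerivative r (φ x) ∈ φ.range := by
    refine derivation_apply_mem_range_of_closure_eq_top
      (closure_setOf_homogeneous_verSub 𝒜 H) ?_ x
    rintro y ⟨i, hi, hyi⟩
    have hmem : aeval s (scaledDerivative r (φ y)) ∈ 𝒜 (i + (e - c)) :=
      aeval_scaledDerivative_mem hR hs hst hr (by rwa [aeval_φ])
    exact ⟨⟨_, mem_verSub (H.add_mem hi hec) hmem⟩, hinj (aeval_φ _)⟩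
  obtain ⟨D, hD⟩ := exists_derivation_semiconj φ_inj φ_range
  refine ⟨D, (isLND_scaledDerivative r).of_semiconj φ_inj hD, ⟨e - c, fun i x hx => ?_⟩, ?_⟩
  · rw [← aeval_φ, hD x]
    exact aeval_scaledDerivative_mem hR hs hst hr (by rwa [aeval_φ])
  · rw [kerDer_eq_comap_of_semiconj φ_inj hD, kerDer_scaledDerivative hr0]
    ext x
    constructor
    · rintro ⟨a, ha⟩
      simp only [Subring.mem_comap, Subring.coe_subtype, ← aeval_φ x, ← ha, aeval_C]
      exact a.2
    · exact fun hx => ⟨⟨x, hx⟩, hinj ((aeval_C s _).trans (aeval_φ x).symm)⟩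

lemma verSub_le_range_aeval_pow [IsDomain B]
    (hR : DirectSum.SetLike.IsHomogeneous 𝒜 R) (ht : t ∈ 𝒜 d) (htt : Transcendental R t)
    (hsurj : Function.Surjective (aeval t : R[X] →ₐ[R] B)) (hH : Tmem 𝒜 H)
    {m : ℕ} (hm : 0 < m) (hdvd : ∀ j : ℕ, j • d ∈ degreesMod 𝒜 R hH → m ∣ j) :
    verSub 𝒜 H ≤ (aeval (t ^ m) : R[X] →ₐ[R] B).toRingHom.range := by
  refine (Subring.closure_le ..).mpr (Set.iUnion₂_subset fun i hi x hx => ?_)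
  obtain ⟨q, rfl⟩ := hsurj x
  have hq : IsHomogPoly 𝒜 d i q := isHomogPoly_of_aeval_mem hR ht htt hx
  have hq_dvd (j : ℕ) (hj : q.coeff j ≠ 0) : m ∣ j := by
    refine hdvd j ?_
    rw [← sub_sub_cancel i (j • d)]
    exact sub_mem (le_degreesMod hH hi) (degree_mem_degreesMod hH (hq j) hj)
  refine ⟨contract m q, ?_⟩
  change aeval (t ^ m) (contract m q) = aeval t q
  rw [← expand_aeval, expand_contract_of_dvd hm hq_dvd]

end Graded

/-- Let B be an integral domain of characteristic 0 graded by an abelian group G, and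
suppose B = R[t] is a polynomial ring in the homogeneous variable t over a graded
subring R of B.  Then for every H ∈ 𝕋(B), R^{(H)} (= R ∩ B^{(H)}, realized as the comap
of R along the inclusion B^{(H)} → B) belongs to KHLND(B^{(H)}): there is a nonzero
homogeneous locally nilpotent derivation of B^{(H)} whose kernel is R^{(H)}. -/
theorem polynomial_ring_KHLND
    {G : Type*} [AddCommGroup G] [DecidableEq G]
    {B : Type*} [CommRing B] [IsDomain B] [CharZero B]
    (𝒜 : G → AddSubgroup B) [GradedRing 𝒜]
    (R : Subring B)
    (hRgraded : ∀ x ∈ R, ∀ i : G, (DirectSum.decompose 𝒜 x i : B) ∈ R)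
    (t : B) (d : G) (ht : t ∈ 𝒜 d)
    (hgen : ∀ b : B, b ∈ Subring.closure ((R : Set B) ∪ {t}))
    (htrans : ∀ (n : ℕ) (c : ℕ → B), (∀ i, c i ∈ R) →
      (∑ i ∈ Finset.range n, c i * t ^ i) = 0 → ∀ i < n, c i = 0)
    (H : AddSubgroup G) (hH : Tmem 𝒜 H) :
    ∃ D : Derivation ℤ (verSub 𝒜 H) (verSub 𝒜 H),
      IsLND D ∧ IsHomogDerOn 𝒜 (verSub 𝒜 H) D ∧ D ≠ 0 ∧
      kerDer D = R.comap (verSub 𝒜 H).subtype := by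
  have hR : DirectSum.SetLike.IsHomogeneous 𝒜 R := fun i x hx => hRgraded x hx i
  have htt : Transcendental R t := transcendental_of_forall_sum_eq_zero htrans
  have hsurj := aeval_surjective_of_forall_mem_closure hgen
  have ht0 : t ≠ 0 := fun h => htt (h ▸ isAlgebraic_zero)
  set m := addOrderOf (d : G ⧸ degreesMod 𝒜 R hH)
  have hm : 0 < m := addOrderOf_mk_degreesMod_pos hH ht ht0
  have hle := verSub_le_range_aeval_pow hR ht htt hsurj hH hm
    fun _ => addOrderOf_mk_dvd_iff.mpr
  obtain ⟨e, r, hrR, hr0, hre, hem⟩ : m • d ∈ degreesMod 𝒜 R hH :=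
    addOrderOf_mk_dvd_iff.mp dvd_rfl
  obtain ⟨D, hlnd, hhom, hker⟩ := exists_isLND_verSub_of_le_range_aeval (r := ⟨r, hrR⟩) hR
    (SetLike.pow_mem_graded m ht) (htt.pow hm) hle hre (Subtype.coe_ne_coe.mp hr0) hem
  refine ⟨D, hlnd, hhom, ?_, hker⟩
  rintro rfl
  refine not_verSub_le hH ht htt fun x hx => ?_
  have hx_ker : (⟨x, hx⟩ : verSub 𝒜 H) ∈ kerDer (0 : Derivation ℤ (verSub 𝒜 H) (verSub 𝒜 H)) := rfl
  rwa [hker] at hx_ker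
end
end

section
/- Let B be a noetherian normal integral domain containing ℚ, graded by a finite abelian group G. If B is saturated in codimension 1, then every derivation δ : B_0 → B_0 extends uniquely to a derivation D : B → B. -/
noncomputable section

/-!
Let `K = Frac B` and `B₀ = verSub 𝒜 ⊥`. A homogeneous `b` of degree `i` has `bⁿ ∈ B₀` for
`n = addOrderOf i`, which is invertible in `B`. Hence two extensions of `δ` agree on `b` after
multiplication by `n bⁿ⁻¹`, and `K` is separable over `Frac B₀`, so that `B₀ → K` is formally étale
and `δ` extends to a derivation `E : B → K`.

It remains to see that `E b ∈ B`. As `B` is noetherian and normal, this can be tested at each prime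
`p` of height one. Saturation gives a homogeneous `s ∉ p` of degree `-i`, for which `b s` and `sⁿ`
lie in `B₀`. Then `n sⁿ E(b) = n sⁿ⁻¹ E(b s) - b E(sⁿ)` lies in `B`, while `n sⁿ ∉ p`.
-/

section Derivation

variable {k R S M N : Type*} [CommRing k] [CommRing R] [Algebra k R] [CommRing S] [Algebra k S]
  [AddCommGroup M] [Module k M] [AddCommGroup N] [Module k N]

open TensorProduct in
theorem exists_derivation_extension_of_formallyEtale [Algebra R S] [IsScalarTower k R S]
    [Algebra.FormallyEtale R S] [Module R M] [Module S M] [IsScalarTower k R M]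
    [IsScalarTower k S M] [IsScalarTower R S M] (d : Derivation k R M) :
    ∃ D : Derivation k S M, ∀ x, D (algebraMap R S x) = d x := by
  let e : S ⊗[R] Ω[R⁄k] ≃ₗ[S] Ω[S⁄k] :=
    KaehlerDifferential.tensorKaehlerEquivOfFormallyEtale k R S
  let f : S ⊗[R] Ω[R⁄k] →ₗ[S] M := LinearMap.liftBaseChange S d.liftKaehlerDifferential
  refine ⟨(f ∘ₗ e.symm.toLinearMap).compDer (KaehlerDifferential.D k S), fun x => ?_⟩
  have he : e.symm (KaehlerDifferential.D k S (algebraMap R S x)) =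
      1 ⊗ₜ KaehlerDifferential.D k R x :=
    KaehlerDifferential.tensorKaehlerEquivOfFormallyEtale_symm_D_algebraMap k R S x
  simp [he, f]

theorem exists_derivation_lift_of_injective [Module R M] [Module R N] [IsScalarTower k R M]
    [IsScalarTower k R N] {f : M →ₗ[R] N} (hf : Function.Injective f) (E : Derivation k R N)
    (hE : ∀ a, E a ∈ LinearMap.range f) : ∃ D : Derivation k R M, ∀ a, f (D a) = E a := by
  let e : M ≃ₗ[R] LinearMap.range f := LinearEquiv.ofInjective f hf
  let L : R →ₗ[k] M := e.symm.toLinearMap.restrictScalars k ∘ₗ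
    E.toLinearMap.codRestrict ((LinearMap.range f).restrictScalars k) hE
  have hL (a : R) : f (L a) = E a :=
    congrArg Subtype.val (e.apply_symm_apply ⟨E a, hE a⟩)
  exact ⟨Derivation.mk' L fun a b => hf (by simp [hL]), hL⟩

theorem pow_smul_derivation_mem [Module R M] {E : Derivation k R M} {P : Submodule R M} {b s : R}
    {n : ℕ} (hn : IsUnit (n : R)) (hbs : E (b * s) ∈ P) (hs : E (s ^ n) ∈ P) :
    s ^ n • E b ∈ P := by
  have key : (n : R) • s ^ n • E b = ((n : R) * s ^ (n - 1)) • E (b * s) - b • E (s ^ n) := by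
    rcases n with _ | n
    · simp
    · simp only [Derivation.leibniz, Derivation.leibniz_pow, Nat.add_sub_cancel]
      module
  rw [← P.smul_mem_iff_of_isUnit hn, key]
  exact P.sub_mem (P.smul_mem _ hbs) (P.smul_mem _ hs)

end Derivation

section Separable

variable {F K : Type*} [Field F] [Field K] [Algebra F K]

theorem isSeparable_of_pow_eq_algebraMap {n : ℕ} (hn : (n : F) ≠ 0) {x : K} {a : F}
    (hx : x ^ n = algebraMap F K a) : IsSeparable F x := by
  rcases eq_or_ne a 0 with rfl | ha
  · obtain rfl : x = 0 := eq_zero_of_pow_eq_zero (hx.trans (map_zero _))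
    exact (separableClosure F K).zero_mem
  · have hroot : Polynomial.aeval x (Polynomial.X ^ n - Polynomial.C a) = 0 := by simp [hx]
    exact (Polynomial.separable_X_pow_sub_C a hn ha).of_dvd (minpoly.dvd F x hroot)

theorem algebraIsSeparable_of_isFractionRing {B : Type*} [CommRing B] [IsDomain B] [Algebra B K]
    [IsFractionRing B K] (h : ∀ b : B, IsSeparable F (algebraMap B K b)) :
    Algebra.IsSeparable F K := by
  refine ⟨fun x => ?_⟩
  obtain ⟨b, c, -, rfl⟩ := IsFractionRing.div_surjective B x
  exact (separableClosure F K).div_mem (h b) (h c)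

end Separable

section HeightOne

theorem heightOne_of_height_eq_one {R : Type*} [CommRing R] {p : Ideal R} [hp : p.IsPrime]
    (h : p.height = 1) : heightOne p := by
  have hlt : ∀ q : Ideal R, q.IsPrime → q < p → q.height = 0 := by
    simpa using (Ideal.height_le_iff (n := 1)).1 h.le
  refine ⟨hp, ?_, fun q r hq hr hqr hrp => ?_⟩
  · have hmin : p ∉ minimalPrimes R := by
      rw [← Ideal.height_eq_zero_iff, h]
      exact one_ne_zero
    rwa [minimalPrimes_eq_minimals, Set.notMem_ofPred_iff, not_minimal_iff_exists_lt hp,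
      exists_congr fun _ => and_comm] at hmin
  · have := Ideal.height_add_one_le_of_lt_of_isPrime hqr
    simp [hlt r hr hrp] at this

theorem exists_isAssociatedPrime_colon_le {R M : Type*} [CommRing R] [IsNoetherianRing R]
    [AddCommGroup M] [Module R M] {N : Submodule R M} {y : M} (hy : y ∉ N) :
    ∃ p : Ideal R, N.IsAssociatedPrime p ∧ N.colon {y} ≤ p := by
  have hcolon (x : M) : (⊥ : Submodule R (M ⧸ N)).colon {N.mkQ x} = N.colon {x} := by
    ext a
    rw [Submodule.mem_colon_singleton, Submodule.mem_colon_singleton, Submodule.mem_bot,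
      ← map_smul, Submodule.mkQ_apply, Submodule.Quotient.mk_eq_zero]
  obtain ⟨p, hp, hle⟩ := exists_le_isAssociatedPrime_of_isNoetherianRing R (N.mkQ y)
    (by simpa using hy)
  obtain ⟨hprime, x, hx⟩ := isAssociatedPrime_iff.1 hp
  obtain ⟨w, rfl⟩ := N.mkQ_surjective x
  exact ⟨p, Submodule.isAssociatedPrime_iff.2 ⟨hprime, w, hx.trans (hcolon w)⟩, hcolon y ▸ hle⟩

variable {B K : Type*} [CommRing B] [Field K] [Algebra B K]

theorem mem_minimalPrimes_span_singleton_of_colon [FaithfulSMul B K] {p : Ideal B} [hp : p.IsPrime]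
    {w : K} (hpw : p = (1 : Submodule B K).colon {w}) {x z : B} (hx : x ∈ p) (hz : z ∉ p)
    (hzx : algebraMap B K z = x • w) : p ∈ (Ideal.span {x}).minimalPrimes := by
  refine ⟨⟨hp, (Ideal.span_singleton_le_iff_mem p).2 hx⟩, fun q ⟨hq, hxq⟩ hqp u hu => ?_⟩
  obtain ⟨t, ht⟩ : ∃ t, algebraMap B K t = u • w := by
    simpa [hpw, Submodule.mem_colon_singleton] using hu
  have hzu : z * u = x * t := by
    apply FaithfulSMul.algebraMap_injective B K
    rw [map_mul, map_mul, hzx, ht, Algebra.smul_def, Algebra.smul_def]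
    ring
  have hmem : z * u ∈ q :=
    hzu ▸ q.mul_mem_right t ((Ideal.span_singleton_le_iff_mem q).1 hxq)
  exact (hq.mem_or_mem hmem).resolve_left fun h => hz (hqp h)

variable [IsFractionRing B K]

theorem one_colon_singleton_ne_bot (w : K) : (1 : Submodule B K).colon {w} ≠ ⊥ := by
  have : Nontrivial B := (algebraMap B K).domain_nontrivial
  obtain ⟨c, a, ha⟩ := IsLocalization.exists_integer_multiple (nonZeroDivisors B) w
  refine (Submodule.ne_bot_iff _).2 ⟨c, ?_, nonZeroDivisors.ne_zero c.2⟩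
  exact Submodule.mem_colon_singleton.2 (Submodule.mem_one.2 ⟨a, ha⟩)

theorem mem_one_of_smul_mem_map [IsIntegrallyClosed B] {I : Ideal B} (hI : I ≠ ⊥) (hfg : I.FG)
    {w : K} (h : ∀ b ∈ I, b • w ∈ Submodule.map (Algebra.linearMap B K) I) :
    w ∈ (1 : Submodule B K) := by
  have hinj : Function.Injective (Algebra.linearMap B K) := IsFractionRing.injective B K
  have hint : IsIntegral B w := by
    refine isIntegral_of_smul_mem_submodule (Submodule.map (Algebra.linearMap B K) I)
      (((Submodule.map_injective_of_injective hinj).ne_iff' (Submodule.map_bot _)).2 hI)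
      (Submodule.FG.map _ hfg) w ?_
    rintro _ ⟨b, hb, rfl⟩
    rw [Algebra.linearMap_apply, smul_eq_mul, mul_comm, ← Algebra.smul_def]
    exact h b hb
  exact Submodule.mem_one.2 (IsIntegrallyClosed.algebraMap_eq_of_integral hint)

variable [IsDomain B] [IsNoetherianRing B] [IsIntegrallyClosed B]

/- An associated prime `p = (B : w)` of `K / B` satisfies `p w ⊆ B` and, `w` not being integral,
`p w ⊄ p`; so locally at `p` it is generated by any `x ∈ p` with `x w ∉ p`, and Krull's principal
ideal theorem applies. -/
theorem height_eq_one_of_isAssociatedPrime_one {p : Ideal B}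
    (hp : (1 : Submodule B K).IsAssociatedPrime p) : p.height = 1 := by
  obtain ⟨hprime, w, hpw⟩ := Submodule.isAssociatedPrime_iff.1 hp
  have hne : p ≠ ⊥ := hpw ▸ one_colon_singleton_ne_bot w
  have hw : w ∉ (1 : Submodule B K) := by
    rw [← one_smul B w, ← Submodule.mem_colon_singleton, ← hpw]
    exact p.ne_top_iff_one.1 hprime.ne_top
  obtain ⟨x, hx, hxw⟩ : ∃ x ∈ p, x • w ∉ Submodule.map (Algebra.linearMap B K) p := by
    contrapose! hw
    exact mem_one_of_smul_mem_map hne (IsNoetherian.noetherian p) hw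
  obtain ⟨z, hz⟩ := Submodule.mem_one.1 (Submodule.mem_colon_singleton.1 (hpw ▸ hx))
  have hzp : z ∉ p := fun h => hxw ⟨z, h, hz⟩
  have hmin := mem_minimalPrimes_span_singleton_of_colon hpw hx hzp hz
  refine le_antisymm (Ideal.height_le_one_of_isPrincipal_of_mem_minimalPrimes _ p hmin) ?_
  rwa [Order.one_le_iff_ne_zero, Ne, Ideal.height_eq_zero_iff_eq_bot]

theorem mem_one_of_forall_heightOne {y : K}
    (h : ∀ p : Ideal B, heightOne p → ∃ s ∉ p, s • y ∈ (1 : Submodule B K)) :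
    y ∈ (1 : Submodule B K) := by
  by_contra hy
  obtain ⟨p, hp, hle⟩ := exists_isAssociatedPrime_colon_le hy
  have := hp.1
  obtain ⟨s, hs, hsy⟩ :=
    h p (heightOne_of_height_eq_one (height_eq_one_of_isAssociatedPrime_one hp))
  exact hs (hle (Submodule.mem_colon_singleton.2 hsy))

end HeightOne

section Graded

variable {G : Type*} [AddCommGroup G] {B : Type*} [CommRing B]
  (𝒜 : G → AddSubgroup B)

theorem mem_verSub_bot {x : B} (hx : x ∈ 𝒜 0) : x ∈ verSub 𝒜 ⊥ :=
  Subring.subset_closure (Set.mem_biUnion (AddSubgroup.zero_mem ⊥) hx)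

theorem pow_addOrderOf_mem_verSub_bot [SetLike.GradedMonoid 𝒜] {i : G} {x : B} (hx : x ∈ 𝒜 i) :
    x ^ addOrderOf i ∈ verSub 𝒜 ⊥ :=
  mem_verSub_bot 𝒜 (addOrderOf_nsmul_eq_zero i ▸ SetLike.pow_mem_graded _ hx)

theorem exists_mem_notMem_of_mem_Mbar [SetLike.GradedMonoid 𝒜] (hG : IsAddTorsion G)
    {p : Ideal B} [hp : p.IsPrime] {i : G} (hi : i ∈ Mbar 𝒜 p) : ∃ s ∈ 𝒜 i, s ∉ p := by
  rw [Mbar, ← AddSubgroup.mem_toAddSubmonoid,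
    AddSubgroup.closure_toAddSubmonoid_of_isOfFinAddOrder fun j _ => hG j] at hi
  induction hi using AddSubmonoid.closure_induction with
  | mem j hj => exact Set.not_subset.1 hj
  | zero => exact ⟨1, SetLike.one_mem_graded 𝒜, p.ne_top_iff_one.1 hp.ne_top⟩
  | add i j _ _ hi hj =>
    obtain ⟨s, hs, hsp⟩ := hi
    obtain ⟨t, ht, htp⟩ := hj
    exact ⟨s * t, SetLike.mul_mem_graded hs ht, hp.mul_notMem hsp htp⟩

theorem mem_Mbar_of_Gbar_eq_Gsub (hsat : Gbar 𝒜 = Gsub 𝒜) {p : Ideal B} (hp : heightOne p)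
    {i : G} {b : B} (hb : b ∈ 𝒜 i) (hb0 : b ≠ 0) : i ∈ Mbar 𝒜 p := by
  have hi : i ∈ Gsub 𝒜 := AddSubgroup.subset_closure fun h : 𝒜 i = ⊥ =>
    hb0 (AddSubgroup.mem_bot.1 (h ▸ hb))
  rw [← hsat, Gbar, if_pos ⟨p, hp⟩] at hi
  exact AddSubgroup.mem_iInf.1 hi ⟨p, hp⟩

variable [DecidableEq G]

theorem derivation_ext_of_eqOn_verSub_bot [GradedRing 𝒜] [IsDomain B] {k M : Type*} [CommRing k]
    [Algebra k B] [AddCommGroup M] [Module k M] [Module B M] [Module.IsTorsionFree B M]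
    (hG : ∀ i : G, (addOrderOf i : B) ≠ 0) {D₁ D₂ : Derivation k B M}
    (h : Set.EqOn D₁ D₂ (verSub 𝒜 ⊥)) : D₁ = D₂ := by
  ext b
  induction b using DirectSum.Decomposition.inductionOn 𝒜 with
  | zero => simp only [map_zero]
  | add b c hb hc => simp only [map_add, hb, hc]
  | @homogeneous i b =>
    obtain ⟨b, hb⟩ := b
    rcases eq_or_ne b 0 with rfl | hb0
    · simp only [map_zero]
    have hpow := h (pow_addOrderOf_mem_verSub_bot 𝒜 hb)
    simp only [Derivation.leibniz_pow, ← Nat.cast_smul_eq_nsmul B] at hpow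
    exact smul_right_injective M (pow_ne_zero _ hb0) (smul_right_injective M (hG i) hpow)

variable [GradedRing 𝒜] [IsDomain B] (K : Type*) [Field K] [Algebra B K] [IsFractionRing B K]

theorem algebraIsSeparable_of_isFractionRing_graded (hG : ∀ i : G, (addOrderOf i : B) ≠ 0)
    (F : Type*) [Field F] [Algebra F K] [Algebra (verSub 𝒜 ⊥) F]
    [IsScalarTower (verSub 𝒜 ⊥) F K] : Algebra.IsSeparable F K := by
  refine algebraIsSeparable_of_isFractionRing fun b : B => ?_
  induction b using DirectSum.Decomposition.inductionOn 𝒜 with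
  | zero => exact map_zero (algebraMap B K) ▸ (separableClosure F K).zero_mem
  | add b c hb hc => exact map_add (algebraMap B K) _ _ ▸ (separableClosure F K).add_mem hb hc
  | @homogeneous i b =>
    have hn : (addOrderOf i : F) ≠ 0 := fun h => hG i <| IsFractionRing.injective B K <| by
      rw [map_natCast, map_zero, ← map_natCast (algebraMap F K), h, map_zero]
    let a : verSub 𝒜 ⊥ := ⟨_, pow_addOrderOf_mem_verSub_bot 𝒜 b.2⟩
    refine isSeparable_of_pow_eq_algebraMap hn (a := algebraMap _ F a) ?_
    rw [← map_pow, ← IsScalarTower.algebraMap_apply]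
    rfl

theorem exists_derivation_fractionField (hG : ∀ i : G, (addOrderOf i : B) ≠ 0)
    (δ : Derivation ℤ (verSub 𝒜 ⊥) (verSub 𝒜 ⊥)) :
    ∃ E : Derivation ℤ B K, ∀ x : verSub 𝒜 ⊥, E (x : B) = algebraMap B K (δ x) := by
  let F := FractionRing (verSub 𝒜 ⊥)
  have : FaithfulSMul (verSub 𝒜 ⊥) K := (faithfulSMul_iff_algebraMap_injective _ _).2
    ((IsFractionRing.injective B K).comp Subtype.val_injective)
  let : Algebra F K := FractionRing.liftAlgebra (verSub 𝒜 ⊥) K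
  have : Algebra.IsSeparable F K := algebraIsSeparable_of_isFractionRing_graded 𝒜 K hG F
  have : Algebra.FormallyEtale F K := .of_isSeparable F K
  have : Algebra.FormallyEtale (verSub 𝒜 ⊥) F := .of_isLocalization (nonZeroDivisors _)
  have : Algebra.FormallyEtale (verSub 𝒜 ⊥) K := .comp _ F K
  obtain ⟨E, hE⟩ := exists_derivation_extension_of_formallyEtale (S := K)
    ((Algebra.linearMap (verSub 𝒜 ⊥) K).compDer δ)
  exact ⟨E.compAlgebraMap B, hE⟩

variable {K} in
theorem derivation_apply_mem_one [IsNoetherianRing B] [IsIntegrallyClosed B]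
    (hG : ∀ i : G, IsUnit (addOrderOf i : B)) (hsat : Gbar 𝒜 = Gsub 𝒜)
    {k : Type*} [CommRing k] [Algebra k B] [Module k K] {E : Derivation k B K}
    (hE : ∀ x ∈ verSub 𝒜 ⊥, E x ∈ (1 : Submodule B K)) (b : B) :
    E b ∈ (1 : Submodule B K) := by
  induction b using DirectSum.Decomposition.inductionOn 𝒜 with
  | zero => simp only [map_zero, zero_mem]
  | add b c hb hc => exact map_add E _ _ ▸ add_mem hb hc
  | @homogeneous i b =>
    obtain ⟨b, hb⟩ := b
    rcases eq_or_ne b 0 with rfl | hb0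
    · simp only [map_zero, zero_mem]
    refine mem_one_of_forall_heightOne fun p hp => ?_
    have := hp.1
    have htors : IsAddTorsion G := fun j => addOrderOf_pos_iff.1
      (Nat.pos_of_ne_zero fun h => (hG j).ne_zero (by rw [h, Nat.cast_zero]))
    obtain ⟨s, hs, hsp⟩ := exists_mem_notMem_of_mem_Mbar 𝒜 htors
      (neg_mem (mem_Mbar_of_Gbar_eq_Gsub 𝒜 hsat hp hb hb0))
    have hbs : b * s ∈ verSub 𝒜 ⊥ :=
      mem_verSub_bot 𝒜 (add_neg_cancel i ▸ SetLike.mul_mem_graded hb hs)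
    exact ⟨s ^ addOrderOf (-i), fun h => hsp (this.mem_of_pow_mem _ h),
      pow_smul_derivation_mem (hG _) (hE _ hbs) (hE _ (pow_addOrderOf_mem_verSub_bot 𝒜 hs))⟩

end Graded

/- Since `addOrderOf i = 0` for `i` of infinite order, `hG` makes `G` torsion. -/
theorem extend_from_degree_zero_general
    {G : Type*} [AddCommGroup G] [DecidableEq G]
    {B : Type*} [CommRing B] [IsDomain B] [IsNoetherianRing B] [IsIntegrallyClosed B]
    (𝒜 : G → AddSubgroup B) [GradedRing 𝒜] (hG : ∀ i : G, IsUnit (addOrderOf i : B))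
    (hsat : Gbar 𝒜 = Gsub 𝒜) (δ : Derivation ℤ (verSub 𝒜 ⊥) (verSub 𝒜 ⊥)) :
    ∃! D : Derivation ℤ B B, ∀ x : (verSub 𝒜 ⊥), D (x : B) = ((δ x : (verSub 𝒜 ⊥)) : B) := by
  have hG0 (i : G) : (addOrderOf i : B) ≠ 0 := (hG i).ne_zero
  have hinj : Function.Injective (Algebra.linearMap B (FractionRing B)) :=
    IsFractionRing.injective B (FractionRing B)
  obtain ⟨E, hE⟩ := exists_derivation_fractionField 𝒜 (FractionRing B) hG0 δ
  have hEB : ∀ b, E b ∈ (1 : Submodule B (FractionRing B)) :=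
    derivation_apply_mem_one 𝒜 hG hsat fun x hx => Submodule.mem_one.2 ⟨_, (hE ⟨x, hx⟩).symm⟩
  obtain ⟨D, hD⟩ := exists_derivation_lift_of_injective hinj E
    fun b => Submodule.mem_one.1 (hEB b)
  have hDδ (x : verSub 𝒜 ⊥) : D (x : B) = δ x := hinj ((hD x).trans (hE x))
  exact ⟨D, hDδ, fun D' hD' => derivation_ext_of_eqOn_verSub_bot 𝒜 hG0 fun x hx =>
    (hD' ⟨x, hx⟩).trans (hDδ ⟨x, hx⟩).symm⟩

/-- Let B be a noetherian normal ℚ-domain graded by a finite abelian group G.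
If B is saturated in codimension 1 (𝔾̄(B) = 𝔾(B)), then every derivation
δ : B₀ → B₀ of the degree-0 subring B₀ = B^{(⊥)} extends uniquely to a derivation
D : B → B. -/
theorem extend_from_degree_zero
    {G : Type*} [AddCommGroup G] [DecidableEq G] [Finite G]
    {B : Type*} [CommRing B] [IsDomain B] [IsNoetherianRing B] [IsIntegrallyClosed B]
    [Algebra ℚ B]
    (𝒜 : G → AddSubgroup B) [GradedRing 𝒜]
    (hsat : Gbar 𝒜 = Gsub 𝒜) :
    ∀ δ : Derivation ℤ (verSub 𝒜 ⊥) (verSub 𝒜 ⊥),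
      ∃! D : Derivation ℤ B B, ∀ x : (verSub 𝒜 ⊥), D (x : B) = ((δ x : (verSub 𝒜 ⊥)) : B) :=
  extend_from_degree_zero_general 𝒜 (fun i => by
    simpa using (IsUnit.mk0 (addOrderOf i : ℚ) (mod_cast (addOrderOf_pos i).ne')).map
      (algebraMap ℚ B)) hsat
end
end
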